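/- arXiv:1711.01492 — 5 statements merged into one kernel-verified Lean document; each statement's English description precedes it below -/
import Mathlib

section
/- In a triangulated category with countable direct sums, every idempotent endomorphism of an object splits (i.e. the category is Karoubian/idempotent complete). -/
open CategoryTheory CategoryTheory.Limits CategoryTheory.Pretriangulated

/-!
The splitting of `e` is the homotopy colimit of `X ⟶ X ⟶ X ⟶ ⋯` along `e`, the cone of
`1 - shift : ∐ X ⟶ ∐ X`. Homotopy colimits are in general only weak colimits, but for an idempotent
`e` the map `1 - shift` is a split monomorphism, so its cone is an honest cokernel, that is, the
colimit of the sequence. Such a colimit splits `e` in any preadditive category: the cocone given by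
`e` in every degree provides the inclusion, the zeroth leg of the colimit the projection.
-/

section Telescope

variable {C : Type*} [Category* C] [Preadditive C]

section Sequence

variable {X : ℕ → C} [HasCoproduct X] (f : ∀ n, X n ⟶ X (n + 1))

/-- The map `1 - shift` on the coproduct of a sequence `X 0 ⟶ X 1 ⟶ X 2 ⟶ ⋯`. Its cokernel is the
colimit of the sequence, and its cone in a triangulated category is the homotopy colimit. -/
noncomputable def telescopeMap : ∐ X ⟶ ∐ X :=
  Sigma.desc fun n => Sigma.ι X n - f n ≫ Sigma.ι X (n + 1)

lemma ι_telescopeMap_comp {Z : C} (g : ∐ X ⟶ Z) (n : ℕ) :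
    Sigma.ι X n ≫ telescopeMap f ≫ g = Sigma.ι X n ≫ g - f n ≫ Sigma.ι X (n + 1) ≫ g := by
  simp [telescopeMap, Preadditive.sub_comp]

lemma telescopeMap_comp_eq_zero_iff {Z : C} (g : ∐ X ⟶ Z) :
    telescopeMap f ≫ g = 0 ↔ ∀ n, Sigma.ι X n ≫ g = f n ≫ Sigma.ι X (n + 1) ≫ g := by
  simp only [← sub_eq_zero (b := f _ ≫ _), ← ι_telescopeMap_comp]
  exact ⟨fun h n => by rw [h, comp_zero], fun h => Sigma.hom_ext _ _ fun n => by simp [h n]⟩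

end Sequence

variable {X : C} [HasCoproduct fun _ : ℕ => X] {e : X ⟶ X}

lemma isSplitMono_telescopeMap_of_idem (he : e ≫ e = e) :
    IsSplitMono (telescopeMap fun _ : ℕ => e) := by
  let ι := Sigma.ι fun _ : ℕ => X
  -- For `e = 0` the map `1 - shift` is the identity, and for `e = 1` it has the retraction
  -- `ι n ↦ -∑ k < n, ι k`; `r` is `1 - e` times the identity plus `e` times this retraction.
  let r : (∐ fun _ : ℕ => X) ⟶ ∐ fun _ : ℕ => X :=
    Sigma.desc fun n => ι n - e ≫ ∑ k ∈ Finset.range (n + 1), ι k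
  have ι_r (n : ℕ) : ι n ≫ r = ι n - e ≫ ∑ k ∈ Finset.range (n + 1), ι k := Sigma.ι_desc _ _
  have e_ι_r (n : ℕ) : e ≫ ι (n + 1) ≫ r = -(e ≫ ∑ k ∈ Finset.range (n + 1), ι k) := by
    rw [ι_r, Preadditive.comp_sub, reassoc_of% he, Finset.sum_range_succ, Preadditive.comp_add]
    abel
  refine IsSplitMono.mk' ⟨r, Sigma.hom_ext _ _ fun n => ?_⟩
  calc ι n ≫ telescopeMap (fun _ => e) ≫ r
      = ι n ≫ r - e ≫ ι (n + 1) ≫ r := ι_telescopeMap_comp _ r n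
    _ = ι n := by rw [ι_r, e_ι_r]; abel
    _ = ι n ≫ 𝟙 _ := (Category.comp_id _).symm

lemma comp_ι_zero_comp_eq_of_telescopeMap_comp_eq_zero (he : e ≫ e = e) {Z : C}
    {g : (∐ fun _ : ℕ => X) ⟶ Z} (hg : telescopeMap (fun _ => e) ≫ g = 0) (n : ℕ) :
    e ≫ Sigma.ι (fun _ : ℕ => X) 0 ≫ g = Sigma.ι (fun _ : ℕ => X) n ≫ g := by
  have ι_comp_g := (telescopeMap_comp_eq_zero_iff _ g).1 hg
  have e_comp_ι_comp_g (n : ℕ) :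
      e ≫ Sigma.ι (fun _ : ℕ => X) n ≫ g = Sigma.ι (fun _ : ℕ => X) n ≫ g := by
    rw [ι_comp_g n, reassoc_of% he]
  induction n with
  | zero => exact e_comp_ι_comp_g 0
  | succ n ih => rw [ih, ι_comp_g n, e_comp_ι_comp_g]

lemma exists_splitting_of_hasCokernel_telescopeMap (he : e ≫ e = e)
    [HasCokernel (telescopeMap fun _ : ℕ => e)] :
    ∃ (Y : C) (i : Y ⟶ X) (p : X ⟶ Y), i ≫ p = 𝟙 Y ∧ p ≫ i = e := by
  let π := cokernel.π (telescopeMap fun _ : ℕ => e)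
  let s : (∐ fun _ : ℕ => X) ⟶ X := Sigma.desc fun _ => e
  have telescopeMap_s : telescopeMap (fun _ => e) ≫ s = 0 :=
    (telescopeMap_comp_eq_zero_iff _ _).2 fun n => by simp [s, he]
  let i := cokernel.desc _ s telescopeMap_s
  have π_i : π ≫ i = s := cokernel.π_desc _ _ _
  refine ⟨_, i, Sigma.ι (fun _ : ℕ => X) 0 ≫ π, ?_, by simp [π_i, s]⟩
  rw [← cancel_epi π, reassoc_of% π_i, Category.comp_id]
  refine Sigma.hom_ext _ _ fun n => ?_
  rw [Sigma.ι_desc_assoc]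
  exact comp_ι_zero_comp_eq_of_telescopeMap_comp_eq_zero he (cokernel.condition _) n

end Telescope

section Pretriangulated

variable {C : Type*} [Category* C] [Preadditive C] [HasZeroObject C]
  [HasShift C ℤ] [∀ n : ℤ, (shiftFunctor C n).Additive] [Pretriangulated C]

lemma hasCokernel_of_mono_of_pretriangulated {X Y : C} (f : X ⟶ Y) [Mono f] : HasCokernel f := by
  obtain ⟨Z, π, δ, hT⟩ := distinguished_cocone_triangle f
  have : Epi π := Triangle.epi₂ _ hT (Triangle.mor₃_eq_zero_of_mono₁ _ hT ‹Mono f›)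
  have hfπ : f ≫ π = 0 := comp_distTriang_mor_zero₁₂ _ hT
  exact ⟨_, CokernelCofork.IsColimit.ofπ' π hfπ fun g hg =>
    have h := Triangle.yoneda_exact₂ _ hT g hg
    ⟨h.choose, h.choose_spec.symm⟩⟩

theorem isIdempotentComplete_of_hasCountableCoproducts_general
    {X : C} [HasCoproduct fun _ : ℕ => X] {e : X ⟶ X} (he : e ≫ e = e) :
    ∃ (Y : C) (i : Y ⟶ X) (p : X ⟶ Y), i ≫ p = 𝟙 Y ∧ p ≫ i = e := by
  have := isSplitMono_telescopeMap_of_idem he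
  have := hasCokernel_of_mono_of_pretriangulated (telescopeMap fun _ : ℕ => e)
  exact exists_splitting_of_hasCokernel_telescopeMap he

end Pretriangulated

/-- A triangulated category with countable direct sums is Karoubian:
every idempotent splits. -/
theorem isIdempotentComplete_of_hasCountableCoproducts
    (C : Type u) [Category.{v} C] [Preadditive C] [HasZeroObject C]
    [HasShift C ℤ] [∀ n : ℤ, (shiftFunctor C n).Additive] [Pretriangulated C]
    [HasCountableCoproducts C] :
    IsIdempotentComplete C :=
  ⟨fun _ _ he => isIdempotentComplete_of_hasCountableCoproducts_general he⟩
end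

section
/- Let R be a commutative Noetherian ring, f ∈ R, and M an R-module with M ∈_f ⟨R⟩_n in D(R-Mod) (i.e. there is M' and a triangle P → M ⊕ M' → C with P ∈ [R]_n and f·C = 0 in the derived category). Then f · Ext^m_R(M,N) = 0 for every R-module N and every m > n. -/
/-!
As `f` kills the cone of `P → M ⊕ M'`, it kills every map out of `M ⊕ M'` whose restriction to `P`
vanishes; so it suffices that, for `ξ : M → N[m]`, every composite `P → M → N[m]` vanishes. In any
abelian category a class of positive degree on `M` is killed by some epimorphism onto `M`, and
dimension shifting along such epimorphisms writes `ξ` as a composite of `m` classes of degree one,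
that is, of maps `Lₖ[k] → Lₖ₊₁[k + 1]`. As `R` is projective, maps from its shifts to `Lₖ[k]` and to
`Lₖ₊₁[k + 1]` live in different degrees, so each factor annihilates every map out of a shift of `R`
(it is a ghost). By the ghost lemma, a composite of `n + 1` ghosts annihilates every map out of an
object of `[R]ₙ`, whence the condition `n < m`.
-/

open CategoryTheory CategoryTheory.Limits CategoryTheory.Pretriangulated

universe v u

variable {C : Type u} [Category.{v} C] [Preadditive C] [HasZeroObject C]
  [HasShift C ℤ] [∀ n : ℤ, (shiftFunctor C n).Additive] [Pretriangulated C]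

/-- The objects of `[G]₀`: finite direct sums of shifts of `G` (up to isomorphism). -/
inductive GenZero (G : C) : C → Prop
  | shift (n : ℤ) (X : C) : Nonempty (X ≅ (shiftFunctor C n).obj G) → GenZero G X
  | zero (X : C) : IsZero X → GenZero G X
  | sum {X Y : C} (Z : C) (b : BinaryBicone X Y) :
      Nonempty b.IsBilimit → Nonempty (Z ≅ b.pt) →
      GenZero G X → GenZero G Y → GenZero G Z

/-- The objects of `[G]ₙ`: objects obtained from `G` in `n` cone-steps, i.e. `F ∈ [G]ₖ`
iff there is a distinguished triangle `F_{k-1} → F → F₀ → F_{k-1}[1]` with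
`F₀ ∈ [G]₀` and `F_{k-1} ∈ [G]_{k-1}`. -/
def Gen (G : C) : ℕ → C → Prop
  | 0 => GenZero G
  | (k+1) => fun X => ∃ (Y Z : C) (f : Y ⟶ X) (g : X ⟶ Z)
      (h : Z ⟶ (shiftFunctor C (1 : ℤ)).obj Y),
      Gen G k Y ∧ GenZero G Z ∧ Triangle.mk f g h ∈ distTriang C

/-- The objects of `⟨G⟩ₙ`, the idempotent closure of `[G]ₙ`:
direct summands of objects of `[G]ₙ`. -/
def ThickGen (G : C) (n : ℕ) (X : C) : Prop :=
  ∃ (X' : C) (b : BinaryBicone X X'), Nonempty b.IsBilimit ∧ Gen G n b.pt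

section

variable (R : Type u) [CommRing R] [IsNoetherianRing R]
  [HasDerivedCategory (ModuleCat.{u} R)]

open DerivedCategory

/-- The `R`-module `N` viewed as an object of the derived category `D(R-Mod)`. -/
noncomputable abbrev sObj (N : ModuleCat.{u} R) : DerivedCategory (ModuleCat.{u} R) :=
  (DerivedCategory.singleFunctor (ModuleCat.{u} R) 0).obj N

/-- `M ∈_f ⟨R⟩ₙ` : there are `M'` and a distinguished triangle
`P → M ⊕ M' → C → P[1]` with `P ∈ [R]ₙ` and `f · C = 0`. -/
def FApprox (f : R) (n : ℕ) (X : DerivedCategory (ModuleCat.{u} R)) : Prop :=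
  ∃ (X' : DerivedCategory (ModuleCat.{u} R)) (b : BinaryBicone X X')
    (_ : Nonempty b.IsBilimit)
    (P : DerivedCategory (ModuleCat.{u} R)) (_ : Gen (sObj R (ModuleCat.of R R)) n P)
    (KC : CochainComplex (ModuleCat.{u} R) ℤ)
    (u : P ⟶ b.pt) (v : b.pt ⟶ DerivedCategory.Q.obj KC)
    (w : DerivedCategory.Q.obj KC ⟶ (shiftFunctor _ (1 : ℤ)).obj P),
    (Triangle.mk u v w ∈ distTriang (DerivedCategory (ModuleCat.{u} R))) ∧ DerivedCategory.Q.map (f • 𝟙 KC) = 0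

universe w

section Ghost

variable {D : Type*} [Category* D] [Preadditive D] [HasShift D ℤ]

/-- A `G`-ghost is a morphism that vanishes after precomposition with any morphism from a shift
of `G`. -/
def ghost (G : D) : MorphismProperty D :=
  fun X _ β ↦ ∀ (i : ℤ) (h : G⟦i⟧ ⟶ X), h ≫ β = 0

/-- The morphisms which are composites of `m` successive `G`-ghosts, with the convention that
every morphism is such a composite when `m = 0`. -/
def ghostPow (G : D) : ℕ → MorphismProperty D
  | 0 => ⊤
  | m + 1 => fun X Y φ ↦ ∃ (Z : D) (α : X ⟶ Z) (β : Z ⟶ Y),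
      ghostPow G m α ∧ ghost G β ∧ α ≫ β = φ

lemma GenZero.comp_eq_zero_of_ghost {G X Y Z : D} (hZ : GenZero G Z) {β : X ⟶ Y}
    (hβ : ghost G β) (h : Z ⟶ X) : h ≫ β = 0 := by
  induction hZ with
  | shift n Z he =>
    obtain ⟨e⟩ := he
    rw [← cancel_epi e.inv, comp_zero, ← Category.assoc]
    exact hβ n _
  | zero Z hZ => exact hZ.eq_of_src _ _
  | sum Z b hb he _ _ ihX ihY =>
    obtain ⟨hb⟩ := hb
    obtain ⟨e⟩ := he
    rw [← cancel_epi e.inv, comp_zero]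
    apply BinaryCofan.IsColimit.hom_ext hb.isColimit
    · simpa using ihX (b.inl ≫ e.inv ≫ h)
    · simpa using ihY (b.inr ≫ e.inv ≫ h)

end Ghost

section Triangle

theorem Gen.comp_eq_zero_of_ghostPow {G P X Y : C} {n m : ℕ} (hP : Gen G n P) (hnm : n < m)
    {φ : X ⟶ Y} (hφ : ghostPow G m φ) (g : P ⟶ X) : g ≫ φ = 0 := by
  induction n generalizing P Y m with
  | zero =>
    obtain ⟨m, rfl⟩ := Nat.exists_eq_add_one_of_ne_zero hnm.ne'
    obtain ⟨Z, α, β, -, hβ, rfl⟩ := hφ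
    rw [← Category.assoc]
    exact GenZero.comp_eq_zero_of_ghost hP hβ (g ≫ α)
  | succ n ih =>
    obtain ⟨m, rfl⟩ := Nat.exists_eq_add_one_of_ne_zero (Nat.ne_zero_of_lt hnm)
    obtain ⟨Z, α, β, hα, hβ, rfl⟩ := hφ
    obtain ⟨P', P₀, a, b, c, hP', hP₀, hT⟩ := hP
    have a_comp : a ≫ g ≫ α = 0 := by
      rw [← Category.assoc]
      exact ih hP' (by lia) hα (a ≫ g)
    obtain ⟨t, ht⟩ : ∃ t : P₀ ⟶ Z, g ≫ α = b ≫ t := Triangle.yoneda_exact₂ _ hT _ a_comp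
    calc g ≫ α ≫ β = b ≫ t ≫ β := by rw [← Category.assoc, ht, Category.assoc]
      _ = 0 := by rw [hP₀.comp_eq_zero_of_ghost hβ t, comp_zero]

variable {k : Type*} [Semiring k] [Linear k C]

lemma smul_eq_zero_of_mor₁_comp_eq_zero {T : Triangle C} (hT : T ∈ distTriang C) {f : k}
    (hf : f • 𝟙 T.obj₃ = 0) {Y : C} {φ : T.obj₂ ⟶ Y} (hφ : T.mor₁ ≫ φ = 0) : f • φ = 0 := by
  obtain ⟨η, rfl⟩ := T.yoneda_exact₂ hT φ hφ
  calc f • (T.mor₂ ≫ η) = T.mor₂ ≫ (f • 𝟙 T.obj₃) ≫ η := by simp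
    _ = 0 := by rw [hf, zero_comp, comp_zero]

theorem smul_eq_zero_of_ghostPow {G : C} {n m : ℕ} {T : Triangle C} (hT : T ∈ distTriang C)
    (hG : Gen G n T.obj₁) {f : k} (hf : f • 𝟙 T.obj₃ = 0) {X Y : C} (r : Retract X T.obj₂)
    (hnm : n < m) {φ : X ⟶ Y} (hφ : ghostPow G m φ) : f • φ = 0 := by
  have mor₁_comp : T.mor₁ ≫ r.r ≫ φ = 0 := by
    rw [← Category.assoc]
    exact hG.comp_eq_zero_of_ghostPow hnm hφ _
  calc f • φ = r.i ≫ (f • (r.r ≫ φ)) := by simp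
    _ = 0 := by rw [smul_eq_zero_of_mor₁_comp_eq_zero hT hf mor₁_comp, comp_zero]

end Triangle

section Yoneda

variable {A : Type*} [Category* A] [Abelian A]

open HomologicalComplex in
lemma exists_epi_single_map_factors {ι : Type*} [DecidableEq ι] {c : ComplexShape ι}
    {K : HomologicalComplex A c} {M : A} {i : ι} (s : K ⟶ (single A c i).obj M)
    [QuasiIsoAt s i] :
    ∃ (E : A) (π : E ⟶ M) (j : (single A c i).obj E ⟶ K), Epi π ∧
      j ≫ s = (single A c i).map π := by
  let π : K.cycles i ⟶ M :=
    K.homologyπ i ≫ homologyMap s i ≫ (singleObjHomologySelfIso c i M).hom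
  have hπ : K.iCycles i ≫ s.f i = π ≫ (singleObjXSelf c i M).inv := by
    simp only [π, Category.assoc]
    rw [homologyπ_naturality_assoc, homologyπ_singleObjHomologySelfIso_hom_assoc,
      ← singleObjCyclesSelfIso_inv_iCycles, Iso.hom_inv_id_assoc, cyclesMap_i]
  refine ⟨K.cycles i, π, mkHomFromSingle (K.iCycles i) (by simp), epi_comp _ _, ?_⟩
  apply from_single_hom_ext
  rw [comp_f, mkHomFromSingle_f, Category.assoc, hπ, single_map_f_self]

lemma exists_epi_map_comp_eq_zero [HasDerivedCategory A] {M : A} {i n : ℤ} (hn : n < i)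
    {Y : DerivedCategory A} [Y.IsLE n] (ξ : (singleFunctor A i).obj M ⟶ Y) :
    ∃ (E : A) (π : E ⟶ M), Epi π ∧ (singleFunctor A i).map π ≫ ξ = 0 := by
  obtain ⟨L, _, ⟨e⟩⟩ := exists_iso_Q_obj_of_isLE Y n
  obtain ⟨K, s, hs, g, hg⟩ :
      ∃ (K : CochainComplex A ℤ) (s : K ⟶ (HomologicalComplex.single A (.up ℤ) i).obj M)
        (_ : IsIso (Q.map s)) (g : K ⟶ L), ξ ≫ e.hom = inv (Q.map s) ≫ Q.map g :=
    right_fac (ξ ≫ e.hom)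
  rw [isIso_Q_map_iff_quasiIso] at hs
  obtain ⟨E, π, j, hπ, hj⟩ := exists_epi_single_map_factors s
  have j_comp_g : j ≫ g = 0 :=
    HomologicalComplex.from_single_hom_ext ((L.isZero_of_isStrictlyLE n i hn).eq_of_tgt _ _)
  have map_comp : Q.map (j ≫ s) ≫ inv (Q.map s) ≫ Q.map g = 0 := by
    rw [Q.map_comp, Category.assoc, IsIso.hom_inv_id_assoc, ← Q.map_comp, j_comp_g,
      Functor.map_zero]
  refine ⟨E, π, hπ, ?_⟩
  rw [← cancel_mono e.hom, zero_comp, Category.assoc, hg]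
  rwa [hj] at map_comp

variable [HasExt.{w} A]

lemma exists_epi_mk₀_comp_eq_zero {M N : A} {m : ℕ} (x : Abelian.Ext M N (m + 1)) :
    ∃ (E : A) (π : E ⟶ M), Epi π ∧ (Abelian.Ext.mk₀ π).comp x (zero_add _) = 0 := by
  let := HasDerivedCategory.standard A
  have := TStructure.t.isLE_shift ((singleFunctor A 0).obj N) 0 (m + 1 : ℕ) (-(m + 1 : ℕ))
  obtain ⟨E, π, hπ, hx⟩ := exists_epi_map_comp_eq_zero (n := -(m + 1 : ℕ)) (by lia) x.hom
  refine ⟨E, π, hπ, Abelian.Ext.ext ?_⟩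
  rw [Abelian.Ext.comp_hom, Abelian.Ext.mk₀_hom, ShiftedHom.mk₀_comp, hx, Abelian.Ext.zero_hom]

lemma exists_extOne_comp_eq {M N : A} {m : ℕ} (x : Abelian.Ext M N (m + 1)) :
    ∃ (L : A) (e : Abelian.Ext M L 1) (y : Abelian.Ext L N m), e.comp y (add_comm 1 m) = x := by
  obtain ⟨E, π, _, hπ⟩ := exists_epi_mk₀_comp_eq_zero x
  let S := ShortComplex.mk _ _ (kernel.condition π)
  have hS : S.ShortExact :=
    { exact := ShortComplex.exact_of_f_is_kernel _ (kernelIsKernel S.g) }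
  obtain ⟨y, hy⟩ := Abelian.Ext.contravariant_sequence_exact₃ hS N x hπ (add_comm 1 m)
  exact ⟨S.X₁, hS.extClass, y, hy⟩

lemma exists_comp_extOne_eq {M N : A} {m : ℕ} (x : Abelian.Ext M N (m + 1)) :
    ∃ (L : A) (y : Abelian.Ext M L m) (e : Abelian.Ext L N 1), y.comp e rfl = x := by
  induction m generalizing M with
  | zero => exact ⟨M, Abelian.Ext.mk₀ (𝟙 M), x, Abelian.Ext.mk₀_id_comp x⟩
  | succ m ih =>
    obtain ⟨L, e, y, rfl⟩ := exists_extOne_comp_eq x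
    obtain ⟨L', y', e', rfl⟩ := ih y
    exact ⟨L', e.comp y' (add_comm 1 m), e', Abelian.Ext.comp_assoc _ _ _ _ _ (by lia)⟩

end Yoneda

section Derived

variable {A : Type*} [Category* A] [Abelian A] [HasDerivedCategory A]

lemma singleFunctor_hom_eq_zero_of_projective (P : A) [Projective P] {i n : ℤ} (hn : n < i)
    (Y : DerivedCategory A) [Y.IsLE n] (φ : (singleFunctor A i).obj P ⟶ Y) : φ = 0 := by
  obtain ⟨K, _, ⟨e⟩⟩ := exists_iso_Q_obj_of_isLE Y n
  rw [← cancel_mono e.hom, zero_comp]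
  exact from_singleFunctor_obj_eq_zero_of_projective _ n hn

lemma shift_hom_eq_zero_of_projective (P N : A) [Projective P] {i p : ℤ} (hip : i ≠ p)
    (φ : ((singleFunctor A 0).obj P)⟦i⟧ ⟶ ((singleFunctor A 0).obj N)⟦p⟧) : φ = 0 := by
  obtain hip | hpi := hip.lt_or_gt
  · have := TStructure.t.isLE_shift ((singleFunctor A 0).obj N) 0 p (-p)
    let e := ((singleFunctors A).shiftIso i (-i) 0 (by lia)).app P
    rw [← cancel_epi e.inv, comp_zero]
    exact singleFunctor_hom_eq_zero_of_projective P (neg_lt_neg hip) _ _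
  · have := TStructure.t.isLE_shift ((singleFunctor A 0).obj P) 0 i (-i)
    have := TStructure.t.isGE_shift ((singleFunctor A 0).obj N) 0 p (-p)
    exact TStructure.t.zero φ (-i) (-p)

lemma ghost_shift_of_ne {G : A} [Projective G] {M N : A} {a b : ℤ} (hab : a ≠ b)
    (β : ((singleFunctor A 0).obj M)⟦a⟧ ⟶ ((singleFunctor A 0).obj N)⟦b⟧) :
    ghost ((singleFunctor A 0).obj G) β := by
  intro i h
  by_cases hi : i = a
  · exact shift_hom_eq_zero_of_projective G N (hi ▸ hab) _
  · rw [shift_hom_eq_zero_of_projective G M hi h, zero_comp]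

lemma ghostPow_ext_hom (G : A) [Projective G] [HasExt.{w} A] {M N : A} {m : ℕ}
    (x : Abelian.Ext M N m) : ghostPow ((singleFunctor A 0).obj G) m x.hom := by
  induction m generalizing N with
  | zero => trivial
  | succ m ih =>
    obtain ⟨L, y, e, rfl⟩ := exists_comp_extOne_eq x
    exact ⟨_, y.hom, _, ih y, ghost_shift_of_ne (by lia) _, (Abelian.Ext.comp_hom y e rfl).symm⟩

theorem ghostPow_of_degree (G : A) [Projective G] {M N : A} {m : ℕ}
    (ξ : (singleFunctor A 0).obj M ⟶ ((singleFunctor A 0).obj N)⟦(m : ℤ)⟧) :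
    ghostPow ((singleFunctor A 0).obj G) m ξ := by
  have := hasExt_of_hasDerivedCategory A
  obtain ⟨x, rfl⟩ := (Abelian.Ext.homEquiv (X := M) (Y := N)).surjective ξ
  exact ghostPow_ext_hom G x

theorem f_annihilates_ext_general {k : Type*} [Ring k] [Linear k A] {G : A} [Projective G] {f : k}
    {n m : ℕ} {T : Triangle (DerivedCategory A)} (hT : T ∈ distTriang (DerivedCategory A))
    (hG : Gen ((singleFunctor A 0).obj G) n T.obj₁) (hf : f • 𝟙 T.obj₃ = 0) {M N : A}
    (r : Retract ((singleFunctor A 0).obj M) T.obj₂) (hnm : n < m)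
    (ξ : (singleFunctor A 0).obj M ⟶ ((singleFunctor A 0).obj N)⟦(m : ℤ)⟧) :
    (singleFunctor A 0).map (f • 𝟙 M) ≫ ξ = 0 := by
  rw [Functor.map_smul, CategoryTheory.Functor.map_id, Linear.smul_comp, Category.id_comp]
  exact smul_eq_zero_of_ghostPow hT hG hf r hnm (ghostPow_of_degree G ξ)

end Derived

/-- If an `R`-module `M` satisfies `M ∈_f ⟨R⟩ₙ` in `D(R-Mod)`, then
`f · Ext^m_R(M, N) = 0` for every `R`-module `N` and every `m > n`;
here `Ext^m_R(M, N) = Hom_{D(R)}(M, N[m])` and multiplication by `f` on this group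
is induced by the multiplication `f • 𝟙 M`. -/
theorem f_annihilates_ext (f : R) (n : ℕ) (M : ModuleCat.{u} R)
    (hM : FApprox R f n (sObj R M)) (N : ModuleCat.{u} R) (m : ℕ) (hm : n < m)
    (ξ : sObj R M ⟶ (shiftFunctor _ ((m : ℤ))).obj (sObj R N)) :
    (DerivedCategory.singleFunctor (ModuleCat.{u} R) 0).map (f • 𝟙 M) ≫ ξ = 0 := by
  obtain ⟨X', b, -, P, hP, KC, p, v, w, hT, hf⟩ := hM
  have smul_id : f • 𝟙 (Q.obj KC) = 0 := by simpa using hf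
  exact f_annihilates_ext_general hT hP smul_id b.retract_left hm ξ

end
end

section
/- Let R be a commutative Noetherian ring such that Perf(R) = ⟨R⟩_n for some n (R is a strong generator of the perfect derived category in n steps). Then R has finite global dimension, in fact gl.dim(R) ≤ n. -/
open CategoryTheory CategoryTheory.Limits CategoryTheory.Pretriangulated

universe v u

variable {C : Type u} [Category.{v} C] [Preadditive C] [HasZeroObject C]
  [HasShift C ℤ] [∀ n : ℤ, (shiftFunctor C n).Additive] [Pretriangulated C]

section

open DerivedCategory Opposite

variable (R : Type u) [CommRing R] [IsNoetherianRing R]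
  [HasDerivedCategory (ModuleCat.{u} R)]

/-- An object of the derived category is perfect if it is isomorphic to a bounded
complex of finitely generated projective modules. -/
def IsPerfect (X : DerivedCategory (ModuleCat.{u} R)) : Prop :=
  ∃ K : CochainComplex (ModuleCat.{u} R) ℤ,
    (∀ i : ℤ, Module.Finite R (K.X i) ∧ Projective (K.X i)) ∧
    (∃ a b : ℤ, ∀ i : ℤ, (i < a ∨ b < i) → IsZero (K.X i)) ∧
    Nonempty (X ≅ DerivedCategory.Q.obj K)

/-!
A morphism `M ⟶ N⟦j⟧` between shifted modules with `0 < j` is an `R`-ghost, since `R` is projective.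
Embedding `N` into injectives and shifting dimension writes a class in `Ext^(n+1)(M, N)` as a
composite of `n + 1` maps of this kind, and by the Ghost Lemma such a composite vanishes after
restriction along any map from an object of `⟨R⟩ₙ`.

If `M` is finitely generated over a Noetherian ring, truncating a resolution of `M` by finitely
generated projectives gives a perfect complex `K` and a map `K ⟶ M` whose cone lives in degrees
`≤ -(n+2)`. A class in `Ext^(n+1)(M, N)` that vanishes on `K` factors through this cone, hence is
zero. In particular `Ext^(n+1)(R ⧸ I, N) = 0` for every ideal `I`, so by Baer's criterion and
dimension shifting every `N` has injective dimension at most `n`.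
-/

section Ghost

variable {T : Type*} [Category* T] [Preadditive T] [HasShift T ℤ]

/-- A `G`-ghost: a morphism annihilated by precomposition with every morphism from a shift
of `G`. -/
def IsGhost (G : T) {A B : T} (g : A ⟶ B) : Prop :=
  ∀ (k : ℤ) (f : G⟦k⟧ ⟶ A), f ≫ g = 0

/-- `IsGhostComp G n g` says that `g` is a composite of `n + 1` maps that are `G`-ghosts; the
index is shifted so as to match the number of cone-steps in `Gen G n`. -/
inductive IsGhostComp (G : T) : ℕ → ∀ {A B : T}, (A ⟶ B) → Prop
  | ghost {A B : T} {g : A ⟶ B} : IsGhost G g → IsGhostComp G 0 g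
  | comp {n : ℕ} {A B D : T} {g₁ : A ⟶ B} {g₂ : B ⟶ D} :
      IsGhostComp G n g₁ → IsGhost G g₂ → IsGhostComp G (n + 1) (g₁ ≫ g₂)

variable {G A B D X : T}

lemma IsGhost.comp_right {g : A ⟶ B} (hg : IsGhost G g) (h : B ⟶ D) : IsGhost G (g ≫ h) :=
  fun k f ↦ by rw [← Category.assoc, hg k f, zero_comp]

lemma GenZero.comp_eq_zero_of_isGhost (hX : GenZero G X) {g : A ⟶ B} (hg : IsGhost G g)
    (f : X ⟶ A) : f ≫ g = 0 := by
  induction hX with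
  | shift k X e =>
    obtain ⟨e⟩ := e
    rw [← cancel_epi e.inv, comp_zero, ← Category.assoc, hg]
  | zero X hX => exact hX.eq_of_src _ _
  | sum Z b hb e _ _ hX hY =>
    obtain ⟨hb⟩ := hb
    obtain ⟨e⟩ := e
    rw [← cancel_epi e.inv]
    apply BinaryCofan.IsColimit.hom_ext hb.isColimit
    · simpa using hX (b.inl ≫ e.inv ≫ f)
    · simpa using hY (b.inr ≫ e.inv ≫ f)

variable [∀ k : ℤ, (shiftFunctor T k).Additive]

lemma IsGhost.shift {g : A ⟶ B} (hg : IsGhost G g) (j : ℤ) : IsGhost G (g⟦j⟧') := by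
  intro k f
  let e : G⟦k⟧ ≅ (G⟦k - j⟧)⟦j⟧ := (shiftFunctorAdd' T (k - j) j k (sub_add_cancel k j)).app G
  obtain ⟨f', hf'⟩ := (shiftFunctor T j).map_surjective (e.inv ≫ f)
  rw [← cancel_epi e.inv, comp_zero, ← Category.assoc, ← hf', ← Functor.map_comp, hg,
    Functor.map_zero]

variable [HasZeroObject T] [Pretriangulated T]

lemma Gen.comp_eq_zero_of_isGhostComp {n : ℕ} {g : A ⟶ B} (hg : IsGhostComp G n g)
    (hX : Gen G n X) (f : X ⟶ A) : f ≫ g = 0 := by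
  induction hg generalizing X with
  | ghost hg => exact GenZero.comp_eq_zero_of_isGhost hX hg f
  | @comp n A B D g₁ g₂ _ hg₂ ih =>
    obtain ⟨Y, Z, u, v, w, hY, hZ, hT⟩ := hX
    have hu : u ≫ f ≫ g₁ = 0 := by rw [← Category.assoc, ih hY]
    obtain ⟨q : Z ⟶ B, hq : f ≫ g₁ = v ≫ q⟩ := Triangle.yoneda_exact₂ _ hT (f ≫ g₁) hu
    rw [← Category.assoc, hq, Category.assoc, hZ.comp_eq_zero_of_isGhost hg₂, comp_zero]

lemma ThickGen.comp_eq_zero_of_isGhostComp {n : ℕ} {g : A ⟶ B} (hX : ThickGen G n X)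
    (hg : IsGhostComp G n g) (f : X ⟶ A) : f ≫ g = 0 := by
  obtain ⟨X', b, -, hb⟩ := hX
  simpa using b.inl ≫= hb.comp_eq_zero_of_isGhostComp hg (b.fst ≫ f)

end Ghost

section DerivedCategory

open ZeroObject

universe w w' v₁ u₁

variable {𝒜 : Type u₁} [Category.{v₁} 𝒜] [Abelian 𝒜] {𝓟 𝓠 : ObjectProperty 𝒜}

/-- `HasResolutionsBy 𝓠 𝓟` says that every object of `𝓠` is a quotient of an object of `𝓟` with
kernel again in `𝓠`, so that it admits a left resolution by objects of `𝓟`. -/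
def HasResolutionsBy (𝓠 𝓟 : ObjectProperty 𝒜) : Prop :=
  ∀ M, 𝓠 M → ∃ (K P : 𝒜) (i : K ⟶ P) (p : P ⟶ M) (w : i ≫ p = 0),
    𝓠 K ∧ 𝓟 P ∧ (ShortComplex.mk i p w).ShortExact

lemma prop_mappingCone_X [𝓟.IsClosedUnderBinaryProducts] [𝓟.IsClosedUnderIsomorphisms]
    {K L : CochainComplex 𝒜 ℤ} (φ : K ⟶ L) (hK : ∀ i, 𝓟 (K.X i)) (hL : ∀ i, 𝓟 (L.X i)) (i : ℤ) :
    𝓟 ((CochainComplex.mappingCone φ).X i) :=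
  𝓟.prop_of_iso (HomologicalComplex.homotopyCofiber.XIsoBiprod φ i (i + 1) rfl).symm
    (𝓟.prop_of_isLimit_binaryFan (BinaryBiproduct.isLimit _ _) (hK (i + 1)) (hL i))

variable [HasDerivedCategory.{w'} 𝒜]

lemma singleFunctor_shift_hom_eq_zero_of_projective {P N : 𝒜} [Projective P] {k j : ℤ}
    (hkj : k < j) (f : ((singleFunctor 𝒜 0).obj P)⟦k⟧ ⟶ ((singleFunctor 𝒜 0).obj N)⟦j⟧) :
    f = 0 := by
  let isoP := ((singleFunctors 𝒜).shiftIso k (-k) 0 (by lia)).app P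
  let isoN := ((singleFunctors 𝒜).shiftIso j (-j) 0 (by lia)).app N
  rw [← cancel_epi isoP.inv, ← cancel_mono isoN.hom, comp_zero, zero_comp]
  exact from_singleFunctor_obj_eq_zero_of_projective
    (L := (CochainComplex.singleFunctor 𝒜 (-j)).obj N) _ (-j) (by lia)

lemma isGhost_singleFunctor_of_pos (P : 𝒜) [Projective P] {M N : 𝒜} {j : ℤ} (hj : 0 < j)
    (g : (singleFunctor 𝒜 0).obj M ⟶ ((singleFunctor 𝒜 0).obj N)⟦j⟧) :
    IsGhost ((singleFunctor 𝒜 0).obj P) g := by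
  intro k f
  obtain hkj | hjk := lt_or_ge k j
  · exact singleFunctor_shift_hom_eq_zero_of_projective hkj _
  · have := TStructure.t.isLE_shift ((singleFunctor 𝒜 0).obj P) 0 k (-k)
    rw [TStructure.t.zero f (-k) 0 (by lia), zero_comp]

lemma isGhostComp_ext_hom [HasExt.{w} 𝒜] [EnoughInjectives 𝒜] (P : 𝒜) [Projective P] {n : ℕ}
    {M N : 𝒜} (e : Abelian.Ext M N (n + 1)) :
    IsGhostComp ((singleFunctor 𝒜 0).obj P) n e.hom := by
  induction n generalizing N with
  | zero => exact .ghost (isGhost_singleFunctor_of_pos P (by lia) _)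
  | succ n ih =>
    let ⟨I⟩ := EnoughInjectives.presentation N
    have hS : (ShortComplex.mk _ _ (cokernel.condition I.f)).ShortExact :=
      { exact := ShortComplex.exact_cokernel I.f }
    obtain ⟨x, rfl⟩ := Abelian.Ext.covariant_sequence_exact₁ M hS e
      (Abelian.Ext.eq_zero_of_injective _) rfl
    have hδ : IsGhost ((singleFunctor 𝒜 0).obj P) hS.extClass.hom :=
      isGhost_singleFunctor_of_pos P (by lia) _
    rw [Abelian.Ext.comp_hom]
    exact .comp (ih x) ((hδ.shift _).comp_right _)

lemma exists_Q_map_eq_of_isKProjective {K L : CochainComplex 𝒜 ℤ} [K.IsKProjective]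
    (f : Q.obj K ⟶ Q.obj L) : ∃ φ : K ⟶ L, Q.map φ = f := by
  obtain ⟨g, hg⟩ := (CochainComplex.IsKProjective.Qh_map_bijective K
    ((HomotopyCategory.quotient _ _).obj L)).surjective
    ((quotientCompQhIso _).hom.app K ≫ f ≫ (quotientCompQhIso _).inv.app L)
  obtain ⟨φ, rfl⟩ := (HomotopyCategory.quotient _ _).map_surjective g
  have h := (quotientCompQhIso 𝒜).hom.naturality φ
  rw [Functor.comp_map, hg] at h
  exact ⟨φ, by simpa using h.symm⟩

/-- The objects of the derived category isomorphic to a bounded complex with terms in `𝓟`.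
For finitely generated projective modules these are the perfect complexes of `IsPerfect`. -/
def boundedComplexes (𝓟 : ObjectProperty 𝒜) : ObjectProperty (DerivedCategory 𝒜) := fun X ↦
  ∃ K : CochainComplex 𝒜 ℤ, (∀ i, 𝓟 (K.X i)) ∧
    (∃ a b : ℤ, ∀ i, (i < a ∨ b < i) → IsZero (K.X i)) ∧ Nonempty (X ≅ Q.obj K)

lemma boundedComplexes_singleFunctor_obj [𝓟.ContainsZero] [𝓟.IsClosedUnderIsomorphisms] {P : 𝒜}
    (hP : 𝓟 P) : boundedComplexes 𝓟 ((singleFunctor 𝒜 0).obj P) := by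
  have hzero {i : ℤ} (hi : i ≠ 0) :
      IsZero (((CochainComplex.singleFunctor 𝒜 0).obj P).X i) :=
    HomologicalComplex.isZero_single_obj_X (ComplexShape.up ℤ) 0 P i hi
  refine ⟨(CochainComplex.singleFunctor 𝒜 0).obj P, fun i ↦ ?_,
    ⟨0, 0, fun i hi ↦ hzero (by lia)⟩, ⟨Iso.refl _⟩⟩
  obtain rfl | hi := eq_or_ne i 0
  · exact 𝓟.prop_of_iso (HomologicalComplex.singleObjXSelf (ComplexShape.up ℤ) 0 P).symm hP
  · exact 𝓟.prop_of_isZero (hzero hi)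

lemma boundedComplexes_of_isZero [𝓟.ContainsZero] [𝓟.IsClosedUnderIsomorphisms]
    {X : DerivedCategory 𝒜} (hX : IsZero X) : boundedComplexes 𝓟 X := by
  obtain ⟨K, hK, hb, ⟨e⟩⟩ := boundedComplexes_singleFunctor_obj (𝓟.prop_zero)
  exact ⟨K, hK, hb, ⟨hX.iso ((singleFunctor 𝒜 0).map_isZero (isZero_zero 𝒜)) ≪≫ e⟩⟩

lemma boundedComplexes_obj₃_of_distTriang [𝓟.IsClosedUnderBinaryProducts]
    [𝓟.IsClosedUnderIsomorphisms] (h𝓟 : 𝓟 ≤ isProjective 𝒜) {t : Triangle (DerivedCategory 𝒜)}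
    (ht : t ∈ distTriang _) (h₁ : boundedComplexes 𝓟 t.obj₁) (h₂ : boundedComplexes 𝓟 t.obj₂) :
    boundedComplexes 𝓟 t.obj₃ := by
  obtain ⟨K, hK, ⟨a, b, hab⟩, ⟨eK⟩⟩ := h₁
  obtain ⟨L, hL, ⟨c, d, hcd⟩, ⟨eL⟩⟩ := h₂
  have (i : ℤ) : Projective (K.X i) := h𝓟 _ (hK i)
  have : K.IsStrictlyLE b :=
    (CochainComplex.isStrictlyLE_iff K b).2 fun i hi ↦ hab i (Or.inr hi)
  have := CochainComplex.isKProjective_of_projective K b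
  obtain ⟨φ, hφ⟩ := exists_Q_map_eq_of_isKProjective (eK.inv ≫ t.mor₁ ≫ eL.hom)
  have comm : t.mor₁ ≫ eL.hom = eK.hom ≫ Q.map φ := by rw [hφ, Iso.hom_inv_id_assoc]
  let e := isoTriangleOfIso₁₂ t _ ht (mappingCone_triangle_distinguished φ) eK eL comm
  refine ⟨CochainComplex.mappingCone φ, prop_mappingCone_X φ hK hL,
    ⟨min (a - 1) c, max (b - 1) d, fun i hi ↦ ?_⟩, ⟨Triangle.π₃.mapIso e⟩⟩
  rw [CochainComplex.mappingCone.isZero_X_iff]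
  exact ⟨hab _ (by lia), hcd _ (by lia)⟩

lemma exists_distTriang_boundedComplexes_isLE [𝓟.IsClosedUnderFiniteProducts]
    (h𝓟 : 𝓟 ≤ isProjective 𝒜) (h : HasResolutionsBy 𝓠 𝓟)
    (m : ℕ) {M : 𝒜} (hM : 𝓠 M) :
    ∃ (K Z : DerivedCategory 𝒜) (f : K ⟶ (singleFunctor 𝒜 0).obj M)
      (g : (singleFunctor 𝒜 0).obj M ⟶ Z) (δ : Z ⟶ K⟦(1 : ℤ)⟧),
      boundedComplexes 𝓟 K ∧ Z.IsLE (-m) ∧ Triangle.mk f g δ ∈ distTriang _ := by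
  have := ObjectProperty.IsClosedUnderBinaryProducts.closedUnderIsomorphisms 𝓟
  have : 𝓟.ContainsZero := ⟨0, isZero_zero 𝒜, 𝓟.prop_of_isTerminal 0 (isZero_zero 𝒜).isTerminal⟩
  induction m generalizing M with
  | zero =>
    refine ⟨0, (singleFunctor 𝒜 0).obj M, 0, 𝟙 _, 0, boundedComplexes_of_isZero (isZero_zero _),
      ?_, contractible_distinguished₁ _⟩
    rw [Nat.cast_zero, neg_zero]
    infer_instance
  | succ m ih =>
    obtain ⟨L, P, i, p, w, hL, hP, hS⟩ := h M hM
    obtain ⟨K, Z, f, g, δ, hK, hZ, hT⟩ := ih hL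
    obtain ⟨K', v, δ', hT'⟩ := distinguished_cocone_triangle (f ≫ (singleFunctor 𝒜 0).map i)
    have hK' : boundedComplexes 𝓟 K' :=
      boundedComplexes_obj₃_of_distTriang h𝓟 hT' hK (boundedComplexes_singleFunctor_obj hP)
    -- The octahedron on `K ⟶ L ⟶ P` relates the cones `Z`, `K'`, `M` of the two maps and their
    -- composite.
    have O := Triangulated.someOctahedron rfl hT hS.singleTriangle_distinguished hT'
    exact ⟨K', Z⟦(1 : ℤ)⟧, O.m₃, _, _, hK', TStructure.t.isLE_shift Z (-m) 1 _ (by lia),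
      rot_of_distTriang _ O.mem⟩

lemma subsingleton_ext_of_boundedComplexes_le_thickGen [HasExt.{w} 𝒜] [EnoughInjectives 𝒜]
    [𝓟.IsClosedUnderFiniteProducts]
    (h𝓟 : 𝓟 ≤ isProjective 𝒜) (h : HasResolutionsBy 𝓠 𝓟) {P : 𝒜} [Projective P] {n : ℕ}
    (hgen : boundedComplexes 𝓟 ≤ ThickGen ((singleFunctor 𝒜 0).obj P) n) {M : 𝒜} (hM : 𝓠 M)
    (N : 𝒜) : Subsingleton (Abelian.Ext M N (n + 1)) := by
  refine subsingleton_of_forall_eq 0 fun e ↦ Abelian.Ext.ext ?_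
  obtain ⟨K, Z, f, g, δ, hK, hZ, hT⟩ :=
    exists_distTriang_boundedComplexes_isLE h𝓟 h (n + 2) hM
  have hf : f ≫ e.hom = 0 := (hgen K hK).comp_eq_zero_of_isGhostComp (isGhostComp_ext_hom P e) f
  obtain ⟨q : Z ⟶ _, hq : e.hom = g ≫ q⟩ := Triangle.yoneda_exact₂ _ hT e.hom hf
  have := TStructure.t.isGE_shift ((singleFunctor 𝒜 0).obj N) 0
    ((n + 1 : ℕ) : ℤ) (-((n + 1 : ℕ) : ℤ)) (by lia)
  have : TStructure.t.IsLE Z (-((n + 2 : ℕ) : ℤ)) := hZ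
  have hq0 : q = 0 := TStructure.t.zero q (-((n + 2 : ℕ) : ℤ)) (-((n + 1 : ℕ) : ℤ)) (by lia)
  rw [hq, hq0, comp_zero, Abelian.Ext.zero_hom]

end DerivedCategory

lemma subsingleton_ext_obj_obj_of_subsingleton_abelianExt (k : Type*) [Ring k] {𝒜 : Type*}
    [Category* 𝒜] [Abelian 𝒜] [Linear k 𝒜] [EnoughProjectives 𝒜] [HasExt 𝒜] {M N : 𝒜} {p : ℕ}
    (h : Subsingleton (Abelian.Ext M N (p + 1))) :
    Subsingleton (((Ext k 𝒜 (p + 1)).obj (op M)).obj N) := by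
  let P := projectiveResolution M
  rw [← ModuleCat.isZero_iff_subsingleton]
  refine IsZero.of_iso ?_ (P.isoExt (p + 1) N)
  rw [← HomologicalComplex.exactAt_iff_isZero_homology,
    HomologicalComplex.exactAt_iff' _ p (p + 1) (p + 2) (by simp) (by simp),
    ShortComplex.moduleCat_exact_iff]
  exact fun x hx ↦ (P.extMk_eq_zero_iff x (p + 2) rfl hx p rfl).1 (h.elim _ _)

section Modules

variable (Λ : Type u) [Ring Λ]

/-- The finitely generated projective `Λ`-modules: the terms of perfect complexes. -/
abbrev finiteProjective : ObjectProperty (ModuleCat.{u} Λ) :=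
  ModuleCat.isFG Λ ⊓ isProjective (ModuleCat.{u} Λ)

instance : (finiteProjective Λ).IsClosedUnderIsomorphisms where
  of_iso e h := by
    obtain ⟨hfin : Module.Finite _ _, hproj : Projective _⟩ := h
    exact ⟨Module.Finite.equiv e.toLinearEquiv, Projective.of_iso e hproj⟩

instance : (finiteProjective Λ).IsClosedUnderFiniteProducts where
  isClosedUnderLimitsOfShape J _ := .mk' <| by
    rintro _ ⟨F, hF⟩
    have hfin (j : J) : Module.Finite Λ (F.obj ⟨j⟩) := (hF ⟨j⟩).1
    have hproj (j : J) : Projective (F.obj ⟨j⟩) := (hF ⟨j⟩).2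
    let e : limit F ≅ ⨁ fun j : J ↦ F.obj ⟨j⟩ :=
      HasLimit.isoOfNatIso Discrete.natIsoFunctor ≪≫ (biproduct.isoProduct _).symm
    refine (finiteProjective Λ).prop_of_iso e.symm
      ⟨Module.Finite.equiv (ModuleCat.biproductIsoPi _).toLinearEquiv.symm, ⟨fun f π _ ↦ ?_⟩⟩
    exact ⟨biproduct.desc fun j ↦
      Projective.factorThru (biproduct.ι (fun j : J ↦ F.obj ⟨j⟩) j ≫ f) π,
      biproduct.hom_ext' _ _ fun j ↦ by simp⟩

lemma hasResolutionsBy_isFG_finiteProjective [IsNoetherianRing Λ] :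
    HasResolutionsBy (ModuleCat.isFG.{u} Λ) (finiteProjective Λ) := by
  intro M (hM : Module.Finite Λ M)
  obtain ⟨r, p, hp⟩ := Module.Finite.exists_fin' Λ M
  exact ⟨_, ModuleCat.of Λ (Fin r → Λ), _, _, _,
    inferInstanceAs (Module.Finite Λ (LinearMap.ker p)),
    ⟨inferInstanceAs (Module.Finite Λ (Fin r → Λ)), inferInstance⟩,
    LinearMap.shortExact_shortComplexKer hp⟩

variable {Λ} {N : ModuleCat.{u} Λ}

lemma moduleBaer_of_subsingleton_ext_quotient
    (hN : ∀ I : Ideal Λ, Subsingleton (Abelian.Ext (ModuleCat.of Λ (Λ ⧸ I)) N 1)) :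
    Module.Baer Λ N := by
  intro I g
  have hI := LinearMap.exact_subtype_mkQ I
  have hS := ModuleCat.shortComplex_shortExact
    (ModuleCat.shortComplexOfCompEqZero _ _ hI.linearMap_comp_eq_zero) hI
    I.injective_subtype I.mkQ_surjective
  obtain ⟨x, hx⟩ := Abelian.Ext.contravariant_sequence_exact₁ hS N
    (Abelian.Ext.mk₀ (ModuleCat.ofHom g)) (add_zero 1) ((hN I).elim _ _)
  obtain ⟨g', rfl⟩ := (Abelian.Ext.mk₀_bijective _ _).surjective x
  rw [Abelian.Ext.mk₀_comp_mk₀] at hx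
  have h := (Abelian.Ext.mk₀_bijective _ _).injective hx
  exact ⟨g'.hom, fun a ha ↦ LinearMap.congr_fun (congrArg ModuleCat.Hom.hom h) ⟨a, ha⟩⟩

lemma hasInjectiveDimensionLT_of_subsingleton_ext_quotient {n : ℕ}
    (hN : ∀ I : Ideal Λ, Subsingleton (Abelian.Ext (ModuleCat.of Λ (Λ ⧸ I)) N (n + 1))) :
    HasInjectiveDimensionLT N (n + 1) := by
  induction n generalizing N with
  | zero =>
    have := (moduleBaer_of_subsingleton_ext_quotient hN).injective
    have : Injective N := Module.injective_object_of_injective_module Λ N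
    exact inferInstanceAs (HasInjectiveDimensionLT N 1)
  | succ n ih =>
    let ⟨J⟩ := EnoughInjectives.presentation N
    have hS : (ShortComplex.mk _ _ (cokernel.condition J.f)).ShortExact :=
      { exact := ShortComplex.exact_cokernel J.f }
    refine (hS.hasInjectiveDimensionLT_X₃_iff n J.injective).1
      (ih fun I ↦ subsingleton_of_forall_eq 0 fun x ↦ ?_)
    obtain ⟨y, rfl⟩ := Abelian.Ext.covariant_sequence_exact₃ _ hS x rfl ((hN I).elim _ _)
    rw [y.eq_zero_of_injective, Abelian.Ext.zero_comp]

theorem globalDimension_le_of_perf_eq_thickGen_general [IsNoetherianRing Λ]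
    [HasDerivedCategory (ModuleCat.{u} Λ)] (P : ModuleCat.{u} Λ) [Projective P] (n : ℕ)
    (hgen : boundedComplexes (finiteProjective Λ) ≤
      ThickGen ((singleFunctor (ModuleCat.{u} Λ) 0).obj P) n)
    (M : ModuleCat.{u} Λ) : HasProjectiveDimensionLE M n := by
  refine hasProjectiveDimensionLT_of_enoughInjectives M (n + 1) fun N ↦ ?_
  have hN : HasInjectiveDimensionLT N (n + 1) :=
    hasInjectiveDimensionLT_of_subsingleton_ext_quotient fun I ↦
      subsingleton_ext_of_boundedComplexes_le_thickGen inf_le_right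
        (hasResolutionsBy_isFG_finiteProjective Λ) hgen
        (inferInstanceAs (Module.Finite Λ (Λ ⧸ I))) N
  exact HasInjectiveDimensionLT.subsingleton N (n + 1) _ le_rfl M

end Modules

/-- If `R` is a strong generator of `Perf(R)` in `n` steps, i.e. every perfect complex
lies in `⟨R⟩ₙ`, then `R` has global dimension at most `n`: `Ext^i` vanishes for
`i > n`. -/
theorem globalDimension_le_of_perf_eq_thickGen (n : ℕ)
    (hgen : ∀ X : DerivedCategory (ModuleCat.{u} R),
      IsPerfect R X → ThickGen (sObj R (ModuleCat.of R R)) n X)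
    (M N : ModuleCat.{u} R) (i : ℕ) (hi : n < i) :
    Subsingleton (((Ext R (ModuleCat.{u} R) i).obj (op M)).obj N) := by
  have hM : HasProjectiveDimensionLT M (n + 1) :=
    globalDimension_le_of_perf_eq_thickGen_general (ModuleCat.of R R) n hgen M
  obtain ⟨p, rfl⟩ := Nat.exists_eq_succ_of_ne_zero (Nat.ne_zero_of_lt hi)
  exact subsingleton_ext_obj_obj_of_subsingleton_abelianExt R (hM.subsingleton M (n + 1) _ hi N)

end
end

section
/- Let R be a commutative Noetherian ring and M, N ∈ D^b(R-mod) bounded complexes of finitely generated modules. If Supp M ∩ Supp N ≠ ∅, then Hom_{D(R)}(M, N[i]) ≠ 0 for some i ∈ ℤ. -/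
open CategoryTheory CategoryTheory.Limits DerivedCategory

/-- Support of an object of the derived category of modules: the union of the
supports of its cohomology modules. -/
noncomputable def derivedSupport (R : Type u) [CommRing R]
    [HasDerivedCategory (ModuleCat.{u} R)]
    (X : DerivedCategory (ModuleCat.{u} R)) : Set (PrimeSpectrum R) :=
  ⋃ i : ℤ, Module.support R ((DerivedCategory.homologyFunctor (ModuleCat.{u} R) i).obj X)

/-!
The Koszul cones of an object on finitely many scalars lie in the thick subcategory it generates,
so a nonzero morphism between shifts of Koszul cones of `M` and `N` forces one between shifts of `M`
and `N`. Supports are closed under specialization, so they share a closed point; taking cones on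
generators of that maximal ideal cuts both supports down to this single point. Then the top
cohomology of one cone and the bottom cohomology of the other are finitely generated modules with
the same one-point support. They admit a nonzero linear map, and truncation lifts it to a morphism
in the derived category.
-/

open Pretriangulated

open scoped Pointwise

section Support

variable {R : Type*} [CommRing R]

lemma support_torsionBy_subset (D : Type*) [AddCommGroup D] [Module R D] (x : R) :
    Module.support R (Submodule.torsionBy R D x) ⊆
      Module.support R D ∩ PrimeSpectrum.zeroLocus {x} := by
  refine Set.subset_inter
    (Module.support_subset_of_injective _ (Submodule.torsionBy R D x).injective_subtype) ?_
  intro p hp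
  rw [PrimeSpectrum.mem_zeroLocus, Set.singleton_subset_iff]
  refine Module.annihilator_le_of_mem_support hp ?_
  exact Module.mem_annihilator.mpr (Submodule.smul_torsionBy x)

variable {A B D : Type*} [AddCommGroup A] [AddCommGroup B] [AddCommGroup D]
  [Module R A] [Module R B] [Module R D]

lemma support_eq_of_exact_lsmul [Module.Finite R A] {x : R} {f : A →ₗ[R] B} {g : B →ₗ[R] D}
    (hxf : Function.Exact (LinearMap.lsmul R A x) f) (hfg : Function.Exact f g)
    (hgx : Function.Exact g (LinearMap.lsmul R D x)) :
    Module.support R B = Module.support R A ∩ PrimeSpectrum.zeroLocus {x} ∪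
      Module.support R (Submodule.torsionBy R D x) := by
  have hker : x • (⊤ : Submodule R A) = LinearMap.ker f := by
    rw [hxf.linearMap_ker_eq]
    ext a
    simp [Submodule.mem_smul_pointwise_iff_exists]
  let f' : QuotSMulTop x A →ₗ[R] B := Submodule.liftQ _ f hker.le
  let g' : B →ₗ[R] Submodule.torsionBy R D x :=
    g.codRestrict _ fun b => (Submodule.mem_torsionBy_iff x _).mpr (hgx.apply_apply_eq_zero b)
  have hf' : Function.Injective f' :=
    LinearMap.ker_eq_bot.mp (Submodule.ker_liftQ_eq_bot' _ _ hker)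
  have hg' : Function.Surjective g' := by
    rintro ⟨d, hd⟩
    obtain ⟨b, rfl⟩ := (hgx d).mp hd
    exact ⟨b, rfl⟩
  have hfg' : Function.Exact f' g' := by
    rw [LinearMap.exact_iff, Submodule.range_liftQ, LinearMap.ker_codRestrict,
      hfg.linearMap_ker_eq]
  rw [← Module.support_quotSMulTop]
  exact Module.support_of_exact hfg' hf' hg'

-- A `B`-regular scalar killing `A` would lie in `p`, hence act nilpotently on `B`.
lemma exists_linearMap_ne_zero_of_support_eq_singleton [IsNoetherianRing R]
    [Module.Finite R A] [Module.Finite R B] {p : PrimeSpectrum R}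
    (hA : p ∈ Module.support R A) (hB : Module.support R B = {p}) :
    ∃ h : A →ₗ[R] B, h ≠ 0 := by
  by_contra! H
  have : Subsingleton (A →ₗ[R] B) := ⟨fun a b => by rw [H a, H b]⟩
  obtain ⟨r, hr, hreg⟩ := IsSMulRegular.subsingleton_linearMap_iff.mp this
  have hrp : r ∈ p.asIdeal := Module.annihilator_le_of_mem_support hA hr
  obtain ⟨n, hn⟩ : r ∈ (Module.annihilator R B).radical := by
    rwa [← PrimeSpectrum.vanishingIdeal_zeroLocus_eq_radical, ← Module.support_eq_zeroLocus, hB,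
      PrimeSpectrum.vanishingIdeal_singleton]
  have : Subsingleton B := ⟨fun a b => hreg.pow n (by simp [Module.mem_annihilator.mp hn])⟩
  rw [Module.support_eq_empty] at hB
  exact Set.singleton_ne_empty p hB.symm

end Support

section Koszul

variable {R C : Type*} [Ring R] [Category* C] [Preadditive C] [Linear R C] [HasZeroObject C]
  [HasShift C ℤ] [∀ n : ℤ, (shiftFunctor C n).Additive] [Pretriangulated C]

/-- The Koszul object `X // s` of a sequence `s` of scalars acting on an object `X` of a linear
pretriangulated category: the iterated cone of multiplication by the members of `s`. Each cone is
an arbitrarily chosen one, so that `koszulObj X s` is determined up to isomorphism only. -/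
noncomputable def koszulObj (X : C) : List R → C
  | [] => X
  | x :: s => (distinguished_cocone_triangle (x • 𝟙 (koszulObj X s))).choose

lemma exists_distinguished_koszulObj_cons (X : C) (x : R) (s : List R) :
    ∃ (f : koszulObj X s ⟶ koszulObj X (x :: s))
      (g : koszulObj X (x :: s) ⟶ (koszulObj X s)⟦(1 : ℤ)⟧),
      Triangle.mk (x • 𝟙 (koszulObj X s)) f g ∈ distTriang C :=
  (distinguished_cocone_triangle (x • 𝟙 (koszulObj X s))).choose_spec

lemma prop_koszulObj (P : ObjectProperty C) [P.IsTriangulatedClosed₃]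
    [P.IsClosedUnderIsomorphisms] {X : C} (hX : P X) (s : List R) : P (koszulObj X s) := by
  induction s with
  | nil => exact hX
  | cons x s ih =>
    obtain ⟨f, g, hT⟩ := exists_distinguished_koszulObj_cons X x s
    exact P.ext_of_isTriangulatedClosed₃ _ hT ih ih

lemma exists_hom_shift_ne_zero_of_koszulObj {X Y : C} (s t : List R) {i : ℤ}
    {φ : koszulObj X s ⟶ (koszulObj Y t)⟦i⟧} (hφ : φ ≠ 0) :
    ∃ (j : ℤ) (ψ : X ⟶ Y⟦j⟧), ψ ≠ 0 := by
  by_contra! H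
  let P : ObjectProperty C := ((ObjectProperty.singleton Y).shiftClosure ℤ).leftOrthogonal
  have hX : P X := by
    rintro Z ψ ⟨_, j, e, ⟨⟩⟩
    rw [← cancel_mono e.hom, H j (ψ ≫ e.hom), zero_comp]
  have hY : P.rightOrthogonal Y := fun _ ψ hZ =>
    hZ ψ (ObjectProperty.le_shiftClosure _ _ ((ObjectProperty.singleton_iff Y Y).mpr rfl))
  exact hφ (P.rightOrthogonal.le_shift i _ (prop_koszulObj _ hY t) φ (prop_koszulObj P hX s))

end Koszul

section Homology

variable {C : Type*} [Category* C] [Abelian C] [HasDerivedCategory C]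

instance linear_derivedCategory_homologyFunctor (S : Type*) [Ring S] [Linear S C] (n : ℤ) :
    (homologyFunctor C n).Linear S := by
  have : (HomologicalComplex.homologyFunctor C (ComplexShape.up ℤ) n).Linear S :=
    ⟨fun f r => ShortComplex.homologyMap_smul
      ((HomologicalComplex.shortComplexFunctor C (ComplexShape.up ℤ) n).map f) r⟩
  have : (Q ⋙ homologyFunctor C n).Linear S :=
    Functor.linear_of_iso _ (homologyFunctorFactors C n).symm
  rw [Functor.linear_iff]
  intro X r
  let e := Q.objObjPreimageIso X
  have hQ : (homologyFunctor C n).map (Q.map (r • 𝟙 (Q.objPreimage X))) = r • 𝟙 _ := by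
    rw [← Functor.comp_map, Functor.map_smul, CategoryTheory.Functor.map_id]
    rfl
  have he : r • 𝟙 X = e.inv ≫ Q.map (r • 𝟙 _) ≫ e.hom := by simp
  rw [he, Functor.map_comp, Functor.map_comp, hQ]
  simp [← Functor.map_comp]

lemma isIso_homology_map_mor₂ {T : Triangle (DerivedCategory C)} (hT : T ∈ distTriang _) (n : ℤ)
    (h : IsZero ((homologyFunctor C n).obj T.obj₁))
    (h' : IsZero ((homologyFunctor C (n + 1)).obj T.obj₁)) :
    IsIso ((homologyFunctor C n).map T.mor₂) := by
  have := (HomologySequence.mono_homologyMap_mor₂_iff T hT n).mpr (h.eq_of_src _ _)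
  have := (HomologySequence.epi_homologyMap_mor₂_iff T hT n (n + 1)).mpr (h'.eq_of_tgt _ _)
  exact isIso_of_mono_of_epi _

lemma isIso_homology_map_mor₁ {T : Triangle (DerivedCategory C)} (hT : T ∈ distTriang _) (n : ℤ)
    (h : IsZero ((homologyFunctor C (n - 1)).obj T.obj₃))
    (h' : IsZero ((homologyFunctor C n).obj T.obj₃)) :
    IsIso ((homologyFunctor C n).map T.mor₁) := by
  have := (HomologySequence.mono_homologyMap_mor₁_iff T hT (n - 1) n).mpr (h.eq_of_src _ _)
  have := (HomologySequence.epi_homologyMap_mor₁_iff T hT n).mpr (h'.eq_of_tgt _ _)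
  exact isIso_of_mono_of_epi _

lemma exists_hom_single_isIso_homology (X : DerivedCategory C) (n : ℤ) [X.IsLE n] :
    ∃ (A : C) (f : X ⟶ (singleFunctor C n).obj A), IsIso ((homologyFunctor C n).map f) := by
  obtain ⟨Z, W, hZ, hW, f, g, h, hT⟩ := TStructure.t.exists_triangle X (n - 1) n (by lia)
  have : Z.IsLE (n - 1) := ⟨hZ⟩
  have : W.IsGE n := ⟨hW⟩
  have hg (i : ℤ) (hi : n ≤ i) : IsIso ((homologyFunctor C i).map g) :=
    isIso_homology_map_mor₂ hT i (isZero_of_isLE Z (n - 1) i (by lia))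
      (isZero_of_isLE Z (n - 1) (i + 1) (by lia))
  have : W.IsLE n := (isLE_iff _ _).mpr fun i hi =>
    have := hg i hi.le
    (isZero_of_isLE X n i hi).of_iso (asIso ((homologyFunctor C i).map g)).symm
  obtain ⟨A, ⟨e⟩⟩ := exists_iso_singleFunctor_obj_of_isGE_of_isLE W n
  have := hg n le_rfl
  exact ⟨A, g ≫ e.hom, by rw [Functor.map_comp]; infer_instance⟩

lemma exists_single_hom_isIso_homology (Y : DerivedCategory C) (n : ℤ) [Y.IsGE n] :
    ∃ (B : C) (f : (singleFunctor C n).obj B ⟶ Y), IsIso ((homologyFunctor C n).map f) := by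
  obtain ⟨Z, W, hZ, hW, f, g, h, hT⟩ := TStructure.t.exists_triangle Y n (n + 1) rfl
  have : Z.IsLE n := ⟨hZ⟩
  have : W.IsGE (n + 1) := ⟨hW⟩
  have hf (i : ℤ) (hi : i ≤ n) : IsIso ((homologyFunctor C i).map f) :=
    isIso_homology_map_mor₁ hT i (isZero_of_isGE W (n + 1) (i - 1) (by lia))
      (isZero_of_isGE W (n + 1) i (by lia))
  have : Z.IsGE n := (isGE_iff _ _).mpr fun i hi =>
    have := hf i hi.le
    (isZero_of_isGE Y n i hi).of_iso (asIso ((homologyFunctor C i).map f))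
  obtain ⟨B, ⟨e⟩⟩ := exists_iso_singleFunctor_obj_of_isGE_of_isLE Z n
  have := hf n le_rfl
  exact ⟨B, e.inv ≫ f, by rw [Functor.map_comp]; infer_instance⟩

instance full_singleFunctor_comp_homologyFunctor (n : ℤ) :
    (singleFunctor C n ⋙ homologyFunctor C n).Full :=
  Functor.Full.of_iso (singleFunctorCompHomologyFunctorIso C n).symm

lemma homology_map_surjective {X Y : DerivedCategory C} (n : ℤ) [X.IsLE n] [Y.IsGE n] :
    Function.Surjective fun φ : X ⟶ Y => (homologyFunctor C n).map φ := by
  intro u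
  obtain ⟨A, f, hf⟩ := exists_hom_single_isIso_homology X n
  obtain ⟨B, g, hg⟩ := exists_single_hom_isIso_homology Y n
  obtain ⟨v, hv⟩ := (singleFunctor C n ⋙ homologyFunctor C n).map_surjective
    (inv ((homologyFunctor C n).map f) ≫ u ≫ inv ((homologyFunctor C n).map g))
  rw [Functor.comp_map] at hv
  exact ⟨f ≫ (singleFunctor C n).map v ≫ g, by simp [hv]⟩

lemma exists_hom_shift_ne_zero_of_homology {X Y : DerivedCategory C} {a b : ℤ} [X.IsLE a]
    [Y.IsGE b] {u : (homologyFunctor C a).obj X ⟶ (homologyFunctor C b).obj Y} (hu : u ≠ 0) :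
    ∃ (i : ℤ) (φ : X ⟶ Y⟦i⟧), φ ≠ 0 := by
  have : (Y⟦b - a⟧).IsGE a := TStructure.t.isGE_shift Y b (b - a) a
  let e : (homologyFunctor C a).obj (Y⟦b - a⟧) ≅ (homologyFunctor C b).obj Y :=
    ((homologyFunctor C 0).shiftIso (b - a) a b (by lia)).app Y
  obtain ⟨φ, hφ⟩ := homology_map_surjective a (u ≫ e.inv)
  refine ⟨b - a, φ, ?_⟩
  rintro rfl
  simp only [Functor.map_zero] at hφ
  exact hu ((Preadditive.IsIso.comp_right_eq_zero u e.inv).mp hφ.symm)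

lemma exists_isLE_not_isZero_homology {X : DerivedCategory C} (hX : TStructure.t.minus X)
    (h : ∃ i : ℤ, ¬ IsZero ((homologyFunctor C i).obj X)) :
    ∃ n : ℤ, X.IsLE n ∧ ¬ IsZero ((homologyFunctor C n).obj X) := by
  obtain ⟨b, _⟩ := hX
  obtain ⟨n, hn, hmax⟩ := Int.exists_greatest_of_bdd
    ⟨b, fun _ hj => not_lt.mp fun hbj => hj (X.isZero_of_isLE b _ hbj)⟩ h
  exact ⟨n, (isLE_iff X n).mpr fun j hj => not_not.mp fun hXj => (hmax j hXj).not_gt hj, hn⟩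

lemma exists_isGE_not_isZero_homology {X : DerivedCategory C} (hX : TStructure.t.plus X)
    (h : ∃ i : ℤ, ¬ IsZero ((homologyFunctor C i).obj X)) :
    ∃ n : ℤ, X.IsGE n ∧ ¬ IsZero ((homologyFunctor C n).obj X) := by
  obtain ⟨a, _⟩ := hX
  obtain ⟨n, hn, hmin⟩ := Int.exists_least_of_bdd
    ⟨a, fun _ hj => not_lt.mp fun hja => hj (X.isZero_of_isGE a _ hja)⟩ h
  exact ⟨n, (isGE_iff X n).mpr fun j hj => not_not.mp fun hXj => (hmin j hXj).not_gt hj, hn⟩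

end Homology

section DerivedSupport

variable {R : Type u} [CommRing R] [HasDerivedCategory (ModuleCat.{u} R)]

lemma mem_derivedSupport_iff {X : DerivedCategory (ModuleCat.{u} R)} {p : PrimeSpectrum R} :
    p ∈ derivedSupport R X ↔
      ∃ i : ℤ, p ∈ Module.support R ((homologyFunctor (ModuleCat.{u} R) i).obj X) :=
  Set.mem_iUnion

lemma derivedSupport_mono_of_le {X : DerivedCategory (ModuleCat.{u} R)} {p q : PrimeSpectrum R}
    (hpq : p ≤ q) (hp : p ∈ derivedSupport R X) : q ∈ derivedSupport R X := by
  obtain ⟨i, hi⟩ := mem_derivedSupport_iff.mp hp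
  exact mem_derivedSupport_iff.mpr ⟨i, Module.mem_support_mono hpq hi⟩

lemma support_homology_subset_derivedSupport (X : DerivedCategory (ModuleCat.{u} R)) (i : ℤ) :
    Module.support R ((homologyFunctor (ModuleCat.{u} R) i).obj X) ⊆ derivedSupport R X :=
  Set.subset_iUnion_of_subset i subset_rfl

lemma support_homology_eq_singleton {X : DerivedCategory (ModuleCat.{u} R)}
    {p : PrimeSpectrum R} (hX : derivedSupport R X = {p}) {i : ℤ}
    (hi : ¬ IsZero ((homologyFunctor (ModuleCat.{u} R) i).obj X)) :
    Module.support R ((homologyFunctor (ModuleCat.{u} R) i).obj X) = {p} := by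
  rw [ModuleCat.isZero_iff_subsingleton, not_subsingleton_iff_nontrivial,
    ← Module.nonempty_support_iff (R := R)] at hi
  exact hi.subset_singleton_iff.mp (hX ▸ support_homology_subset_derivedSupport X i)

lemma exists_not_isZero_homology_of_mem_derivedSupport {X : DerivedCategory (ModuleCat.{u} R)}
    {p : PrimeSpectrum R} (hp : p ∈ derivedSupport R X) :
    ∃ i : ℤ, ¬ IsZero ((homologyFunctor (ModuleCat.{u} R) i).obj X) := by
  obtain ⟨i, hi⟩ := mem_derivedSupport_iff.mp hp
  refine ⟨i, ?_⟩
  rw [ModuleCat.isZero_iff_subsingleton, not_subsingleton_iff_nontrivial,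
    ← Module.nonempty_support_iff (R := R)]
  exact ⟨p, hi⟩

variable (R) in
/-- The objects of the derived category of `R`-modules all of whose cohomology modules are finitely
generated; no boundedness is required. -/
def finiteHomology : ObjectProperty (DerivedCategory (ModuleCat.{u} R)) :=
  fun X => ∀ i : ℤ, Module.Finite R ((homologyFunctor (ModuleCat.{u} R) i).obj X)

instance isClosedUnderIsomorphisms_finiteHomology :
    (finiteHomology R).IsClosedUnderIsomorphisms where
  of_iso e hX i :=
    have := hX i
    Module.Finite.equiv ((homologyFunctor (ModuleCat.{u} R) i).mapIso e).toLinearEquiv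

lemma exact_homology_map_mor₁_mor₂ {T : Triangle (DerivedCategory (ModuleCat.{u} R))}
    (hT : T ∈ distTriang _) (i : ℤ) :
    Function.Exact ((homologyFunctor (ModuleCat.{u} R) i).map T.mor₁).hom
      ((homologyFunctor (ModuleCat.{u} R) i).map T.mor₂).hom :=
  (ShortComplex.ShortExact.moduleCat_exact_iff_function_exact _).mp
    (HomologySequence.exact₂ T hT i)

lemma exact_homology_map_mor₂_δ {T : Triangle (DerivedCategory (ModuleCat.{u} R))}
    (hT : T ∈ distTriang _) (i : ℤ) :
    Function.Exact ((homologyFunctor (ModuleCat.{u} R) i).map T.mor₂).hom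
      (HomologySequence.δ T i (i + 1)).hom :=
  (ShortComplex.ShortExact.moduleCat_exact_iff_function_exact _).mp
    (HomologySequence.exact₃ T hT i (i + 1))

lemma exact_homology_δ_map_mor₁ {T : Triangle (DerivedCategory (ModuleCat.{u} R))}
    (hT : T ∈ distTriang _) (i : ℤ) :
    Function.Exact (HomologySequence.δ T i (i + 1)).hom
      ((homologyFunctor (ModuleCat.{u} R) (i + 1)).map T.mor₁).hom :=
  (ShortComplex.ShortExact.moduleCat_exact_iff_function_exact _).mp
    (HomologySequence.exact₁ T hT i (i + 1))

lemma homology_map_smul_id_hom (X : DerivedCategory (ModuleCat.{u} R)) (x : R) (i : ℤ) :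
    ((homologyFunctor (ModuleCat.{u} R) i).map (x • 𝟙 X)).hom = LinearMap.lsmul R _ x := by
  rw [Functor.map_smul, CategoryTheory.Functor.map_id]
  rfl

lemma support_homology_obj₃_of_distinguished {X Y : DerivedCategory (ModuleCat.{u} R)} {x : R}
    {f : X ⟶ Y} {g : Y ⟶ X⟦(1 : ℤ)⟧} (hT : Triangle.mk (x • 𝟙 X) f g ∈ distTriang _)
    (i : ℤ) [Module.Finite R ((homologyFunctor (ModuleCat.{u} R) i).obj X)] :
    Module.support R ((homologyFunctor (ModuleCat.{u} R) i).obj Y) =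
      Module.support R ((homologyFunctor (ModuleCat.{u} R) i).obj X) ∩
          PrimeSpectrum.zeroLocus {x} ∪
        Module.support R
          (Submodule.torsionBy R ((homologyFunctor (ModuleCat.{u} R) (i + 1)).obj X) x) := by
  have hxf : Function.Exact (LinearMap.lsmul R _ x)
      ((homologyFunctor (ModuleCat.{u} R) i).map f).hom := by
    rw [← homology_map_smul_id_hom]
    exact exact_homology_map_mor₁_mor₂ hT i
  have hgx : Function.Exact (HomologySequence.δ (Triangle.mk (x • 𝟙 X) f g) i (i + 1)).hom
      (LinearMap.lsmul R ((homologyFunctor (ModuleCat.{u} R) (i + 1)).obj X) x) := by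
    rw [← homology_map_smul_id_hom]
    exact exact_homology_δ_map_mor₁ hT i
  exact support_eq_of_exact_lsmul hxf (exact_homology_map_mor₂_δ hT i) hgx

lemma derivedSupport_of_distinguished {X Y : DerivedCategory (ModuleCat.{u} R)} {x : R}
    (hX : finiteHomology R X) {f : X ⟶ Y} {g : Y ⟶ X⟦(1 : ℤ)⟧}
    (hT : Triangle.mk (x • 𝟙 X) f g ∈ distTriang _) :
    derivedSupport R Y = derivedSupport R X ∩ PrimeSpectrum.zeroLocus {x} := by
  have hY (i : ℤ) := have := hX i; support_homology_obj₃_of_distinguished hT i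
  apply subset_antisymm
  · refine Set.iUnion_subset fun i => ?_
    rw [hY i]
    exact Set.union_subset
      (Set.inter_subset_inter_left _ (support_homology_subset_derivedSupport X i))
      ((support_torsionBy_subset _ x).trans
        (Set.inter_subset_inter_left _ (support_homology_subset_derivedSupport X (i + 1))))
  · rw [derivedSupport, Set.iUnion_inter]
    refine Set.iUnion_subset fun i => ?_
    exact (Set.subset_union_left.trans (hY i).superset).trans
      (support_homology_subset_derivedSupport Y i)

variable [IsNoetherianRing R]

instance isTriangulatedClosed₃_finiteHomology :
    (finiteHomology R).IsTriangulatedClosed₃ :=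
  .mk' fun T hT h₁ h₂ i => by
    have := h₁ (i + 1)
    have := h₂ i
    have := isNoetherian_of_range_eq_ker _ _
      (exact_homology_map_mor₂_δ hT i).linearMap_ker_eq.symm
    infer_instance

lemma derivedSupport_koszulObj {X : DerivedCategory (ModuleCat.{u} R)} (hX : finiteHomology R X)
    (s : List R) :
    derivedSupport R (koszulObj X s) =
      derivedSupport R X ∩ PrimeSpectrum.zeroLocus (Ideal.ofList s) := by
  induction s with
  | nil => simp [koszulObj]
  | cons x s ih =>
    obtain ⟨f, g, hT⟩ := exists_distinguished_koszulObj_cons X x s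
    rw [derivedSupport_of_distinguished (prop_koszulObj _ hX s) hT, ih, Ideal.ofList_cons,
      PrimeSpectrum.zeroLocus_sup, PrimeSpectrum.zeroLocus_span {x}, Set.inter_assoc,
      Set.inter_comm (PrimeSpectrum.zeroLocus {x})]

lemma exists_koszulObj_derivedSupport_eq_singleton {p : PrimeSpectrum R}
    (hp : p.asIdeal.IsMaximal) :
    ∃ s : List R, ∀ X : DerivedCategory (ModuleCat.{u} R), finiteHomology R X →
      p ∈ derivedSupport R X → derivedSupport R (koszulObj X s) = {p} := by
  obtain ⟨s, hs⟩ := IsNoetherian.noetherian p.asIdeal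
  have hsp : Ideal.ofList s.toList = p.asIdeal := by simpa [Ideal.ofList] using hs
  refine ⟨s.toList, fun X hX hpX => ?_⟩
  rw [derivedSupport_koszulObj hX, hsp, ← PrimeSpectrum.closure_singleton,
    ((PrimeSpectrum.isClosed_singleton_iff_isMaximal p).mpr hp).closure_eq,
    Set.inter_eq_right, Set.singleton_subset_iff]
  exact hpX

lemma exists_hom_shift_ne_zero_of_derivedSupport_eq_singleton
    {X Y : DerivedCategory (ModuleCat.{u} R)} (hX : TStructure.t.minus X)
    (hY : TStructure.t.plus Y) (hXfg : finiteHomology R X) (hYfg : finiteHomology R Y)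
    {p : PrimeSpectrum R} (hXp : derivedSupport R X = {p}) (hYp : derivedSupport R Y = {p}) :
    ∃ (i : ℤ) (φ : X ⟶ Y⟦i⟧), φ ≠ 0 := by
  obtain ⟨a, _, hXa⟩ := exists_isLE_not_isZero_homology hX
    (exists_not_isZero_homology_of_mem_derivedSupport (hXp ▸ Set.mem_singleton p))
  obtain ⟨b, _, hYb⟩ := exists_isGE_not_isZero_homology hY
    (exists_not_isZero_homology_of_mem_derivedSupport (hYp ▸ Set.mem_singleton p))
  have := hXfg a
  have := hYfg b
  obtain ⟨u, hu⟩ := exists_linearMap_ne_zero_of_support_eq_singleton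
    (support_homology_eq_singleton hXp hXa ▸ Set.mem_singleton p)
    (support_homology_eq_singleton hYp hYb)
  exact exists_hom_shift_ne_zero_of_homology (u := ModuleCat.ofHom u)
    fun h => hu (congrArg ModuleCat.Hom.hom h)

theorem hom_shift_ne_zero_of_support_intersect_general
    {M N : DerivedCategory (ModuleCat.{u} R)} (hM : TStructure.t.minus M)
    (hN : TStructure.t.plus N) (hMfg : finiteHomology R M) (hNfg : finiteHomology R N)
    (hsupp : (derivedSupport R M ∩ derivedSupport R N).Nonempty) :
    ∃ (i : ℤ) (φ : M ⟶ N⟦i⟧), φ ≠ 0 := by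
  obtain ⟨p, hpM, hpN⟩ := hsupp
  obtain ⟨m, hm, hpm⟩ := Ideal.exists_le_maximal p.asIdeal p.2.ne_top
  let q : PrimeSpectrum R := ⟨m, hm.isPrime⟩
  obtain ⟨s, hs⟩ := exists_koszulObj_derivedSupport_eq_singleton (p := q) hm
  obtain ⟨i, φ, hφ⟩ := exists_hom_shift_ne_zero_of_derivedSupport_eq_singleton
    (prop_koszulObj _ hM s) (prop_koszulObj _ hN s)
    (prop_koszulObj _ hMfg s) (prop_koszulObj _ hNfg s)
    (hs M hMfg (derivedSupport_mono_of_le hpm hpM)) (hs N hNfg (derivedSupport_mono_of_le hpm hpN))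
  exact exists_hom_shift_ne_zero_of_koszulObj s s hφ

end DerivedSupport

/-- If `M`, `N` are objects of `D^b(R-mod)` (bounded complexes with finitely generated
cohomology over a commutative Noetherian ring) with `Supp M ∩ Supp N ≠ ∅`, then
`Hom_{D(R)}(M, N[i]) ≠ 0` for some `i : ℤ`. -/
theorem hom_shift_ne_zero_of_support_intersect
    (R : Type u) [CommRing R] [IsNoetherianRing R]
    [HasDerivedCategory (ModuleCat.{u} R)]
    (M N : DerivedCategory (ModuleCat.{u} R))
    (hMb : ∃ a b : ℤ, ∀ i : ℤ, (i < a ∨ b < i) →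
      IsZero ((DerivedCategory.homologyFunctor (ModuleCat.{u} R) i).obj M))
    (hNb : ∃ a b : ℤ, ∀ i : ℤ, (i < a ∨ b < i) →
      IsZero ((DerivedCategory.homologyFunctor (ModuleCat.{u} R) i).obj N))
    (hMfg : ∀ i : ℤ, Module.Finite R
      ((DerivedCategory.homologyFunctor (ModuleCat.{u} R) i).obj M))
    (hNfg : ∀ i : ℤ, Module.Finite R
      ((DerivedCategory.homologyFunctor (ModuleCat.{u} R) i).obj N))
    (hsupp : (derivedSupport R M ∩ derivedSupport R N).Nonempty) :
    ∃ (i : ℤ) (φ : M ⟶ (shiftFunctor (DerivedCategory (ModuleCat.{u} R)) i).obj N),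
      φ ≠ 0 := by
  obtain ⟨_, b, hb⟩ := hMb
  obtain ⟨a, _, ha⟩ := hNb
  exact hom_shift_ne_zero_of_support_intersect_general
    ⟨b, (isLE_iff M b).mpr fun i hi => hb i (.inr hi)⟩
    ⟨a, (isGE_iff N a).mpr fun i hi => ha i (.inl hi)⟩ hMfg hNfg hsupp
end

section
/- Let R be a commutative Noetherian ring, and let M, N be objects of D^-(R-mod) (bounded above complexes with finitely generated cohomology) with Supp M ∩ Supp N ≠ ∅. Then M ⊗^L_R N ≠ 0 in the derived category. -/
open CategoryTheory CategoryTheory.Limits MonoidalCategory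

variable (R : Type u) [CommRing R]

noncomputable instance : (curriedTensor (ModuleCat.{u} R)).Additive where
  map_add := by
    intros
    ext X : 2
    exact MonoidalPreadditive.add_whiskerRight ..

instance (M : ModuleCat.{u} R) : ((curriedTensor (ModuleCat.{u} R)).obj M).Additive where
  map_add := by
    intros
    exact MonoidalPreadditive.whiskerLeft_add ..

/-- The tensor product of two cochain complexes of `R`-modules
(the total complex of the tensor-product bicomplex). -/
noncomputable abbrev tensorComplex (K L : CochainComplex (ModuleCat.{u} R) ℤ) :
    CochainComplex (ModuleCat.{u} R) ℤ :=
  HomologicalComplex.mapBifunctor K L (curriedTensor (ModuleCat.{u} R)) (ComplexShape.up ℤ)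

/-- The support of a complex: the union of the supports of its cohomology modules. -/
noncomputable def complexSupport (K : CochainComplex (ModuleCat.{u} R) ℤ) :
    Set (PrimeSpectrum R) :=
  ⋃ i : ℤ, Module.support R (K.homology i)

/-!
Let `P` and `Q` be K-projective resolutions of the two complexes, let `p` lie in both supports, and
let `a` be the greatest degree with `p ∈ Supp H^a(P)`. As `P_p` has no cohomology above `a`, the
localization map `P ⟶ P_p` lifts up to homotopy through the truncation of `P_p` in degrees at most
`a`; hence every linear map `H^a(P) → κ(p)` extends from cocycles to `P^a`, killing coboundaries.
Finite generation provides a nonzero one. Doing the same for `Q` in degree `b`, the product of the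
two resulting forms is a cocycle on `P ⊗ Q` with values in the field `κ(p)`, and it does not vanish
on the tensor product of suitable cocycles.
-/

section KProjective

variable {C : Type*} [Category* C] [Abelian C]

lemma isKProjective_of_projective_of_isZero (P : CochainComplex C ℤ)
    (hP : ∀ i, Projective (P.X i)) (hb : ∃ b : ℤ, ∀ i, b < i → IsZero (P.X i)) :
    P.IsKProjective := by
  obtain ⟨b, hb⟩ := hb
  have : P.IsStrictlyLE b := (CochainComplex.isStrictlyLE_iff P b).2 hb
  exact CochainComplex.isKProjective_of_projective P b

attribute [local instance] HasDerivedCategory.standard in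
lemma exists_homotopy_comp_of_quasiIso {K L M : CochainComplex C ℤ} [K.IsKProjective]
    (s : L ⟶ M) [QuasiIso s] (f : K ⟶ M) : ∃ g : K ⟶ L, Nonempty (Homotopy (g ≫ s) f) := by
  let q := HomotopyCategory.quotient C (.up ℤ)
  have : IsIso (DerivedCategory.Qh.map (q.map s)) :=
    inferInstanceAs (IsIso (DerivedCategory.Q.map s))
  obtain ⟨g', hg'⟩ := (CochainComplex.IsKProjective.Qh_map_bijective K (q.obj L)).surjective
    (DerivedCategory.Qh.map (q.map f) ≫ inv (DerivedCategory.Qh.map (q.map s)))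
  obtain ⟨g, rfl⟩ := q.map_surjective g'
  have hgs : q.map (g ≫ s) = q.map f := by
    apply (CochainComplex.IsKProjective.Qh_map_bijective K _).injective
    rw [Functor.map_comp, Functor.map_comp, hg', Category.assoc, IsIso.inv_hom_id,
      Category.comp_id]
  exact ⟨g, ⟨HomotopyCategory.homotopyOfEq _ _ hgs⟩⟩

lemma exists_homologyι_comp_eq_homologyMap {K M : CochainComplex C ℤ} [K.IsKProjective]
    (f : K ⟶ M) (n : ℤ) [M.IsLE n] :
    ∃ r : K.opcycles n ⟶ M.homology n,
      K.homologyι n ≫ r = HomologicalComplex.homologyMap f n := by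
  obtain ⟨g, ⟨h⟩⟩ := exists_homotopy_comp_of_quasiIso (M.ιTruncLE n) f
  have : IsIso ((M.truncLE n).homologyι n) :=
    (M.truncLE n).isIso_homologyι n (n + 1) (by simp)
      ((CochainComplex.isZero_of_isStrictlyLE _ n _).eq_of_tgt _ _)
  refine ⟨HomologicalComplex.opcyclesMap g n ≫ inv ((M.truncLE n).homologyι n) ≫
    HomologicalComplex.homologyMap (M.ιTruncLE n) n, ?_⟩
  rw [← h.homologyMap_eq, HomologicalComplex.homologyMap_comp,
    ← HomologicalComplex.homologyι_naturality_assoc, IsIso.hom_inv_id_assoc]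

end KProjective

section NaturalTransformation

open ShortComplex in
lemma homologyMap_mapNatTrans_comp_mapHomologyIso {C : Type*} [Category* C] [HasZeroMorphisms C]
    {F : C ⥤ C} [F.PreservesZeroMorphisms] (η : 𝟭 C ⟶ F) (S : ShortComplex C) [S.HasHomology]
    [F.PreservesLeftHomologyOf S] [(S.map F).HasHomology] :
    homologyMap (S₁ := S) (S.mapNatTrans η) ≫ (S.mapHomologyIso F).hom = η.app S.homology := by
  let h := S.leftHomologyData
  let γ : LeftHomologyMapData (S₁ := S) (S.mapNatTrans η) h (h.map F) :=
    { φK := η.app h.K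
      φH := η.app h.H
      commi := (η.naturality h.i).symm
      commf' := by rw [h.map_f']; exact η.naturality h.f'
      commπ := η.naturality h.π }
  let e : (S.map F).homology ≅ F.obj h.H := (h.map F).homologyIso
  rw [γ.homologyMap_eq, h.mapHomologyIso_eq]
  calc (h.homologyIso.hom ≫ η.app h.H ≫ e.inv) ≫ e.hom ≫ F.map h.homologyIso.inv
    _ = h.homologyIso.hom ≫ η.app h.H ≫ F.map h.homologyIso.inv := by
      simp only [Category.assoc, e.inv_hom_id_assoc]
    _ = η.app S.homology := by
      rw [← η.naturality, Functor.id_map, Iso.hom_inv_id_assoc]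

lemma exists_homologyι_comp_eq_app {C : Type*} [Category* C] [Abelian C] {F : C ⥤ C}
    [F.PreservesZeroMorphisms] [F.PreservesHomology] (η : 𝟭 C ⟶ F) (K : CochainComplex C ℤ)
    [K.IsKProjective] (n : ℤ) (hF : ∀ i, n < i → IsZero (F.obj (K.homology i))) :
    ∃ r : K.opcycles n ⟶ F.obj (K.homology n), K.homologyι n ≫ r = η.app (K.homology n) := by
  let L : CochainComplex C ℤ := (F.mapHomologicalComplex (.up ℤ)).obj K
  let e (i : ℤ) : L.homology i ≅ F.obj (K.homology i) := (K.sc i).mapHomologyIso F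
  have : L.IsLE n := (CochainComplex.isLE_iff _ _).2 fun i hi ↦
    (L.exactAt_iff_isZero_homology i).2 ((hF i hi).of_iso (e i))
  let f : K ⟶ L := { f i := η.app (K.X i), comm' _ _ _ := (η.naturality _).symm }
  have he : HomologicalComplex.homologyMap f n ≫ (e n).hom = η.app (K.homology n) :=
    homologyMap_mapNatTrans_comp_mapHomologyIso η (K.sc n)
  obtain ⟨r, hr⟩ := exists_homologyι_comp_eq_homologyMap f n
  exact ⟨r ≫ (e n).hom, by rw [reassoc_of% hr, he]⟩

end NaturalTransformation

section Module

variable {R} {K : CochainComplex (ModuleCat.{u} R) ℤ} {n : ℤ}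

/-- The natural map `M → A ⊗[R] M`, `m ↦ 1 ⊗ₜ m`, to the base change along an `R`-algebra `A`,
whose target is regarded as an `R`-module so that base change is an endofunctor. -/
noncomputable def toTensorLeft (A : Type u) [Ring A] [Algebra R A] :
    𝟭 (ModuleCat.{u} R) ⟶ tensorLeft (ModuleCat.of R A) where
  app M := ModuleCat.ofHom (TensorProduct.mk R A M 1)
  naturality _ _ _ := rfl

open TensorProduct in
lemma exists_homologyι_comp_eq_ofHom [K.IsKProjective] (A : Type u) [CommRing A]
    [Algebra R A] [Module.Flat R A] (hA : ∀ i, n < i → Subsingleton (A ⊗[R] K.homology i))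
    {V : Type u} [AddCommGroup V] [Module R V] [Module A V] [IsScalarTower R A V]
    (ℓ : K.homology n →ₗ[R] V) :
    ∃ r : K.opcycles n ⟶ .of R V, K.homologyι n ≫ r = ModuleCat.ofHom ℓ := by
  obtain ⟨r, hr⟩ := exists_homologyι_comp_eq_app (toTensorLeft A) K n fun i hi ↦
    have := hA i hi
    ModuleCat.isZero_of_subsingleton (.of R (A ⊗[R] K.homology i))
  refine ⟨r ≫ ModuleCat.ofHom ((ℓ.liftBaseChange A).restrictScalars R), ?_⟩
  rw [reassoc_of% hr]
  ext x
  exact (ℓ.liftBaseChange_tmul _ _ _).trans (one_smul A _)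

lemma exists_d_eq_zero_and_pOpcycles_ne_zero {V : ModuleCat.{u} R} {φ : K.opcycles n ⟶ V}
    (hφ : K.homologyι n ≫ φ ≠ 0) : ∃ x : K.X n, K.d n (n + 1) x = 0 ∧ φ (K.pOpcycles n x) ≠ 0 := by
  contrapose! hφ
  rw [← cancel_epi (K.homologyπ n), HomologicalComplex.homology_π_ι_assoc, comp_zero]
  ext z
  exact hφ (K.iCycles n z) congr($(K.iCycles_d n (n + 1)) z)

lemma piSingle_pOpcycles_comp_d_apply {V : ModuleCat.{u} R} (φ : K.opcycles n ⟶ V) (i : ℤ)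
    (x : K.X i) :
    Pi.single (M := fun i ↦ K.X i →ₗ[R] V) n (K.pOpcycles n ≫ φ).hom (i + 1)
      (K.d i (i + 1) x) = 0 := by
  by_cases hi : i + 1 = n
  · subst hi
    rw [Pi.single_eq_same]
    exact (congrArg φ congr($(K.d_pOpcycles i (i + 1)) x)).trans (map_zero _)
  · rw [Pi.single_eq_of_ne hi, LinearMap.zero_apply]

end Module

namespace tensorComplex

variable {R} {K L : CochainComplex (ModuleCat.{u} R) ℤ} {i j n : ℤ}

/-- The inclusion of the summand `K.X i ⊗ L.X j` into the total complex. -/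
noncomputable abbrev ι (h : i + j = n) : K.X i ⊗ L.X j ⟶ (tensorComplex R K L).X n :=
  HomologicalComplex.ιMapBifunctor K L (curriedTensor (ModuleCat.{u} R)) (.up ℤ) i j n h

lemma ι_d (h : i + j = n) :
    ι h ≫ (tensorComplex R K L).d n (n + 1) =
      K.d i (i + 1) ▷ L.X j ≫ ι (by lia) +
        i.negOnePow • K.X i ◁ L.d j (j + 1) ≫ ι (by lia) := by
  rw [HomologicalComplex.mapBifunctor.d_eq, Preadditive.comp_add,
    HomologicalComplex.mapBifunctor.ι_D₁, HomologicalComplex.mapBifunctor.ι_D₂,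
    HomologicalComplex.mapBifunctor.d₁_eq K L _ (.up ℤ) (rfl : i + 1 = i + 1) j _
      (show i + 1 + j = n + 1 by lia),
    HomologicalComplex.mapBifunctor.d₂_eq K L _ (.up ℤ) i (rfl : j + 1 = j + 1) _
      (show i + (j + 1) = n + 1 by lia)]
  exact congr($(one_smul _ _) + _)

/-- The homogeneous element `x ⊗ y` of the total complex, for `x` of degree `i` and `y` of
degree `j`; the total degree `n` is kept separate from `i + j` to avoid casts. -/
noncomputable def tmul (h : i + j = n) (x : K.X i) (y : L.X j) : (tensorComplex R K L).X n :=
  ι h (x ⊗ₜ[R] y)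

lemma tmul_zero (h : i + j = n) (x : K.X i) : tmul (L := L) h x 0 = 0 :=
  (congrArg _ (TensorProduct.tmul_zero _ x)).trans (map_zero _)

lemma zero_tmul (h : i + j = n) (y : L.X j) : tmul (K := K) h 0 y = 0 :=
  (congrArg _ (TensorProduct.zero_tmul _ y)).trans (map_zero _)

lemma d_tmul (h : i + j = n) (x : K.X i) (y : L.X j) :
    (tensorComplex R K L).d n (n + 1) (tmul h x y) =
      tmul (by lia) (K.d i (i + 1) x) y + i.negOnePow • tmul (by lia) x (L.d j (j + 1) y) :=
  congr($(ι_d h) (x ⊗ₜ y))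

lemma hom_ext {V : ModuleCat.{u} R} {f g : (tensorComplex R K L).X n ⟶ V}
    (hfg : ∀ (i j : ℤ) (h : i + j = n) (x : K.X i) (y : L.X j), f (tmul h x y) = g (tmul h x y)) :
    f = g :=
  HomologicalComplex.mapBifunctor.hom_ext fun i j h ↦
    ModuleCat.hom_ext (TensorProduct.ext' fun x y ↦ hfg i j h x y)

section Desc

variable {V : Type u} [AddCommGroup V] [Module R V] (β : ∀ i j, K.X i →ₗ[R] L.X j →ₗ[R] V)

/-- The linear map on the degree `n` part of the total complex induced by a family of bilinear
maps on its summands. -/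
noncomputable def desc (n : ℤ) : (tensorComplex R K L).X n ⟶ .of R V :=
  HomologicalComplex.mapBifunctorDesc fun i j _ ↦ ModuleCat.ofHom (TensorProduct.lift (β i j))

lemma desc_tmul (h : i + j = n) (x : K.X i) (y : L.X j) : desc β n (tmul h x y) = β i j x y := by
  rw [tmul, desc, ← ModuleCat.comp_apply, HomologicalComplex.ι_mapBifunctorDesc]
  rfl

end Desc

section ExternalProduct

variable {A : Type u} [Ring A] [Algebra R A] {a b : ℤ}

section

variable {φ : ∀ i, K.X i →ₗ[R] A} {ψ : ∀ j, L.X j →ₗ[R] A}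

lemma d_comp_desc_mul (hφ : ∀ i x, φ (i + 1) (K.d i (i + 1) x) = 0)
    (hψ : ∀ j y, ψ (j + 1) (L.d j (j + 1) y) = 0) (m n : ℤ) :
    (tensorComplex R K L).d m n ≫
      desc (fun i j ↦ (LinearMap.mul R A).compl₁₂ (φ i) (ψ j)) n = 0 := by
  by_cases hmn : m + 1 = n
  · subst hmn
    refine hom_ext fun i j h x y ↦ ?_
    rw [ModuleCat.comp_apply, d_tmul, map_add, Units.smul_def, map_zsmul, desc_tmul, desc_tmul]
    simp only [LinearMap.compl₁₂_apply, LinearMap.mul_apply', hφ, hψ, zero_mul, mul_zero,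
      smul_zero, add_zero]
    rfl
  · rw [(tensorComplex R K L).shape m n hmn, zero_comp]

lemma not_isZero_homology_of_mul_ne_zero (hφ : ∀ i x, φ (i + 1) (K.d i (i + 1) x) = 0)
    (hψ : ∀ j y, ψ (j + 1) (L.d j (j + 1) y) = 0) {x : K.X a} (hx : K.d a (a + 1) x = 0)
    {y : L.X b} (hy : L.d b (b + 1) y = 0) (hxy : φ a x * ψ b y ≠ 0) :
    ¬ IsZero ((tensorComplex R K L).homology (a + b)) := by
  intro hzero
  rw [← HomologicalComplex.exactAt_iff_isZero_homology,
    HomologicalComplex.exactAt_iff' _ (a + b - 1) (a + b) (a + b + 1) (by simp) (by simp),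
    ShortComplex.moduleCat_exact_iff] at hzero
  have hcycle : (tensorComplex R K L).d (a + b) (a + b + 1) (tmul rfl x y) = 0 := by
    rw [d_tmul, hx, hy, zero_tmul, tmul_zero, smul_zero, add_zero]
  obtain ⟨w, hw⟩ := hzero _ hcycle
  let β (i j : ℤ) := (LinearMap.mul R A).compl₁₂ (φ i) (ψ j)
  refine hxy ?_
  calc φ a x * ψ b y = desc β (a + b) (tmul rfl x y) := (desc_tmul β rfl x y).symm
    _ = desc β (a + b) ((tensorComplex R K L).d (a + b - 1) (a + b) w) := congrArg _ hw.symm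
    _ = 0 := congr($(d_comp_desc_mul hφ hψ (a + b - 1) (a + b)) w)

end

lemma not_isZero_homology_of_homologyι_comp_ne_zero [NoZeroDivisors A] {φ : K.opcycles a ⟶ .of R A}
    {ψ : L.opcycles b ⟶ .of R A} (hφ : K.homologyι a ≫ φ ≠ 0) (hψ : L.homologyι b ≫ ψ ≠ 0) :
    ¬ IsZero ((tensorComplex R K L).homology (a + b)) := by
  obtain ⟨x, hx, hφx⟩ := exists_d_eq_zero_and_pOpcycles_ne_zero hφ
  obtain ⟨y, hy, hψy⟩ := exists_d_eq_zero_and_pOpcycles_ne_zero hψ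
  refine not_isZero_homology_of_mul_ne_zero (piSingle_pOpcycles_comp_d_apply φ)
    (piSingle_pOpcycles_comp_d_apply ψ) hx hy ?_
  rw [Pi.single_eq_same, Pi.single_eq_same]
  exact mul_ne_zero hφx hψy

end ExternalProduct

end tensorComplex

section Support

variable {R} {p : PrimeSpectrum R}

open TensorProduct in
lemma subsingleton_localizationAtPrime_tensorProduct {M : Type*} [AddCommGroup M] [Module R M]
    (hp : p ∉ Module.support R M) : Subsingleton (Localization.AtPrime p.asIdeal ⊗[R] M) := by
  have := Module.notMem_support_iff.1 hp
  exact (LocalizedModule.equivTensorProduct p.asIdeal.primeCompl M).symm.subsingleton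

open TensorProduct in
lemma exists_linearMap_residueField_ne_zero {M : Type*} [AddCommGroup M] [Module R M]
    [Module.Finite R M] (hp : p ∈ Module.support R M) :
    ∃ ℓ : M →ₗ[R] p.asIdeal.ResidueField, ℓ ≠ 0 := by
  let κ := p.asIdeal.ResidueField
  have := (Module.mem_support_iff_nontrivial_residueField_tensorProduct p).1 hp
  obtain ⟨g, hg⟩ := exists_ne (0 : Module.Dual κ (κ ⊗[R] M))
  exact ⟨(LinearMap.liftBaseChangeEquiv κ).symm g, by simpa using hg⟩

variable {K M : CochainComplex (ModuleCat.{u} R) ℤ}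

lemma exists_greatest_mem_support_homology
    (hb : ∃ b : ℤ, ∀ i, b < i → IsZero (K.homology i)) (hp : p ∈ complexSupport R K) :
    ∃ a : ℤ, p ∈ Module.support R (K.homology a) ∧
      ∀ i, a < i → p ∉ Module.support R (K.homology i) := by
  obtain ⟨b, hb⟩ := hb
  have hbdd (i : ℤ) (hi : p ∈ Module.support R (K.homology i)) : i ≤ b := by
    by_contra! hbi
    have := ModuleCat.subsingleton_of_isZero (hb i hbi)
    simp [Module.support_eq_empty] at hi
  obtain ⟨a, ha, hmax⟩ := Int.exists_greatest_of_bdd ⟨b, hbdd⟩ (Set.mem_iUnion.1 hp)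
  exact ⟨a, ha, fun i hai hi ↦ (hmax i hi).not_gt hai⟩

lemma exists_homologyι_comp_residueField_ne_zero [K.IsKProjective]
    (hb : ∃ b : ℤ, ∀ i, b < i → IsZero (K.homology i))
    (hfg : ∀ i, Module.Finite R (K.homology i)) (hp : p ∈ complexSupport R K) :
    ∃ (a : ℤ) (φ : K.opcycles a ⟶ .of R p.asIdeal.ResidueField), K.homologyι a ≫ φ ≠ 0 := by
  obtain ⟨a, ha, hmax⟩ := exists_greatest_mem_support_homology hb hp
  obtain ⟨ℓ, hℓ⟩ := exists_linearMap_residueField_ne_zero ha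
  obtain ⟨φ, hφ⟩ := exists_homologyι_comp_eq_ofHom (Localization.AtPrime p.asIdeal)
    (fun i hi ↦ subsingleton_localizationAtPrime_tensorProduct (hmax i hi)) ℓ
  exact ⟨a, φ, hφ ▸ fun h ↦ hℓ congr(($h).hom)⟩

lemma exists_homologyι_comp_residueField_ne_zero_of_quasiIso [K.IsKProjective] (π : K ⟶ M)
    [QuasiIso π] (hb : ∃ b : ℤ, ∀ i, b < i → IsZero (M.homology i))
    (hfg : ∀ i, Module.Finite R (M.homology i)) (hp : p ∈ complexSupport R M) :
    ∃ (a : ℤ) (φ : K.opcycles a ⟶ .of R p.asIdeal.ResidueField), K.homologyι a ≫ φ ≠ 0 := by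
  let e (i : ℤ) : K.homology i ≅ M.homology i := asIso (HomologicalComplex.homologyMap π i)
  have hsupp : complexSupport R K = complexSupport R M :=
    Set.iUnion_congr fun i ↦ (e i).toLinearEquiv.support_eq
  refine exists_homologyι_comp_residueField_ne_zero ?_ (fun i ↦ ?_) (hsupp ▸ hp)
  · exact hb.imp fun b hb i hi ↦ (hb i hi).of_iso (e i)
  · exact Module.Finite.equiv (e i).toLinearEquiv.symm

end Support

theorem derived_tensor_ne_zero_of_support_intersect_general
    (M N P Q : CochainComplex (ModuleCat.{u} R) ℤ) [P.IsKProjective] [Q.IsKProjective]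
    (hMb : ∃ b : ℤ, ∀ i : ℤ, b < i → IsZero (M.homology i))
    (hNb : ∃ b : ℤ, ∀ i : ℤ, b < i → IsZero (N.homology i))
    (hMfg : ∀ i : ℤ, Module.Finite R (M.homology i))
    (hNfg : ∀ i : ℤ, Module.Finite R (N.homology i))
    (πP : P ⟶ M) [QuasiIso πP] (πQ : Q ⟶ N) [QuasiIso πQ]
    (hsupp : (complexSupport R M ∩ complexSupport R N).Nonempty) :
    ∃ i : ℤ, ¬ IsZero ((tensorComplex R P Q).homology i) := by
  obtain ⟨p, hpM, hpN⟩ := hsupp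
  obtain ⟨a, φ, hφ⟩ := exists_homologyι_comp_residueField_ne_zero_of_quasiIso πP hMb hMfg hpM
  obtain ⟨b, ψ, hψ⟩ := exists_homologyι_comp_residueField_ne_zero_of_quasiIso πQ hNb hNfg hpN
  exact ⟨a + b, tensorComplex.not_isZero_homology_of_homologyι_comp_ne_zero hφ hψ⟩

/-- Let `R` be commutative Noetherian and let `M`, `N` be cohomologically bounded-above
complexes with finitely generated cohomology modules and `Supp M ∩ Supp N ≠ ∅`. Then
`M ⊗^L_R N ≠ 0`: for any bounded-above complexes of projectives `P`, `Q` quasi-isomorphic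
to `M`, `N`, the complex `P ⊗ Q` (computing the derived tensor product) has nonzero
cohomology in some degree. -/
theorem derived_tensor_ne_zero_of_support_intersect
    [IsNoetherianRing R]
    (M N P Q : CochainComplex (ModuleCat.{u} R) ℤ)
    (hMb : ∃ b : ℤ, ∀ i : ℤ, b < i → IsZero (M.homology i))
    (hNb : ∃ b : ℤ, ∀ i : ℤ, b < i → IsZero (N.homology i))
    (hMfg : ∀ i : ℤ, Module.Finite R (M.homology i))
    (hNfg : ∀ i : ℤ, Module.Finite R (N.homology i))
    (hP : ∀ i : ℤ, Projective (P.X i)) (hPb : ∃ b : ℤ, ∀ i : ℤ, b < i → IsZero (P.X i))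
    (hQ : ∀ i : ℤ, Projective (Q.X i)) (hQb : ∃ b : ℤ, ∀ i : ℤ, b < i → IsZero (Q.X i))
    (πP : P ⟶ M) (hπP : QuasiIso πP) (πQ : Q ⟶ N) (hπQ : QuasiIso πQ)
    (hsupp : (complexSupport R M ∩ complexSupport R N).Nonempty) :
    ∃ i : ℤ, ¬ IsZero ((tensorComplex R P Q).homology i) := by
  have := isKProjective_of_projective_of_isZero P hP hPb
  have := isKProjective_of_projective_of_isZero Q hQ hQb
  exact derived_tensor_ne_zero_of_support_intersect_general R M N P Q hMb hNb hMfg hNfg πP πQ hsupp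
end
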